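/- arXiv:math/0406264 — 6 statements merged into one kernel-verified Lean document; each statement's English description precedes it below -/
import Mathlib

section
/- Let X be a real normed vector space of finite dimension n ≥ 1 and suppose there exists a linear equivalence T : X → EuclideanSpace ℝ (Fin n) such that ‖x‖ ≤ ‖T x‖ ≤ (1 + 1/(n+1)) · ‖x‖ for all x ∈ X (i.e. the Banach–Mazur distance from X to ℓ₂^n is at most 1 + 1/(n+1)). Then every equilateral set in X of at most n points can be extended: if p_1, …, p_m ∈ X with m ≤ n satisfy ‖p_i − p_j‖ = 1 for all i ≠ j, then there exists p ∈ X with ‖p − p_i‖ = 1 for all i. In particular X contains an equilateral set of n+1 points. -/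
open Module

/-
Put the images `T (p i)` in Euclidean space and look for a point at prescribed distances `r i` from
them. When all distances in question lie in `[1, c]`, the squared distance matrix is so close to a
constant matrix that it has strict negative type, hence the point exists; taking it on a fixed
normal to the span of the `T (p i)` makes it depend continuously on `r`. As `T` distorts norms by at
most `c`, correcting `r` by the error of the distances in `X` maps `[1, c] ^ m` into itself, and a
Brouwer fixed point gives the required extension.

Brouwer's theorem is derived from Scarf's lemma, a path-following parity argument on dominant sets:
for the barycentric coordinates on a fine grid of the simplex, dominant sets have small diameter,
which yields the covering form of Sperner's lemma.
-/

section DominantSets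

variable {T I L : Type*} [LinearOrder L] {ρ : I → T → L} {σ τ : Finset T}

/-- `σ` is dominant (Scarf's *subordinating set*) for the rows `ρ i` when no element of `T` exceeds
the minimum over `σ` of every row at once. -/
def IsDominant (ρ : I → T → L) (σ : Finset T) : Prop :=
  ∀ y, ∃ i, ∀ x ∈ σ, ρ i y ≤ ρ i x

/-- `m` attains the minimum over `σ` of the row `ρ i`. -/
def IsRowMin (ρ : I → T → L) (σ : Finset T) (i : I) (m : T) : Prop :=
  m ∈ σ ∧ ∀ x ∈ σ, ρ i m ≤ ρ i x

/-- The elements that exceed the minimum over `σ` of every row except possibly row `a`; the pivot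
step of Scarf's algorithm chooses among them. -/
def pivotCandidates (ρ : I → T → L) (σ : Finset T) (a : I) : Set T :=
  {z | ∀ k ≠ a, ∃ x ∈ σ, ρ k x < ρ k z}

/-- `y` is a pivot of `σ` in row `a`: the candidate that is largest in that row. -/
def IsPivot (ρ : I → T → L) (σ : Finset T) (a : I) (y : T) : Prop :=
  y ∈ pivotCandidates ρ σ a ∧ IsMaxOn (ρ a) (pivotCandidates ρ σ a) y

theorem exists_isRowMin (hσ : σ.Nonempty) (i : I) : ∃ m, IsRowMin ρ σ i m :=
  σ.exists_min_image (ρ i) hσ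

theorem IsRowMin.eq (hρ : ∀ i, Function.Injective (ρ i)) {i : I} {x y : T}
    (hx : IsRowMin ρ σ i x) (hy : IsRowMin ρ σ i y) : x = y :=
  hρ i ((hx.2 y hy.1).antisymm (hy.2 x hx.1))

theorem exists_isPivot [Finite T] {a : I} (h : (pivotCandidates ρ σ a).Nonempty) :
    ∃ y, IsPivot ρ σ a y := by
  obtain ⟨y, hy, hmax⟩ := Set.exists_max_image _ (ρ a) (Set.toFinite _) h
  exact ⟨y, hy, isMaxOn_iff.2 hmax⟩

theorem IsPivot.eq (hρ : ∀ i, Function.Injective (ρ i)) {a : I} {y z : T}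
    (hy : IsPivot ρ σ a y) (hz : IsPivot ρ σ a z) : y = z :=
  hρ a ((hz.2 hy.1).antisymm (hy.2 hz.1))

theorem exists_ne_isRowMin_isRowMin [Fintype I] (hσ : σ.Nonempty)
    (hcard : σ.card < Fintype.card I) :
    ∃ i j m, i ≠ j ∧ IsRowMin ρ σ i m ∧ IsRowMin ρ σ j m := by
  choose μ hμ using exists_isRowMin (ρ := ρ) hσ
  obtain ⟨i, -, j, -, hij, h⟩ := Finset.exists_ne_map_eq_of_card_lt_of_maps_to
    (s := Finset.univ) hcard (f := μ) fun i _ => (hμ i).1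
  exact ⟨i, j, μ i, hij, hμ i, h ▸ hμ j⟩

namespace IsDominant

theorem anti (h : σ ⊆ τ) (hτ : IsDominant ρ τ) : IsDominant ρ σ := fun y =>
  (hτ y).imp fun _ hi x hx => hi x (h hx)

theorem exists_isRowMin (hσ : IsDominant ρ σ) {x : T} (hx : x ∈ σ) : ∃ i, IsRowMin ρ σ i x :=
  (hσ x).imp fun _ hi => ⟨hx, hi⟩

theorem isRowMin_row_injective [Fintype I] (hρ : ∀ i, Function.Injective (ρ i))
    (hτ : IsDominant ρ τ) (hcard : τ.card = Fintype.card I) {i j : I} {m : T}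
    (hi : IsRowMin ρ τ i m) (hj : IsRowMin ρ τ j m) : i = j := by
  choose μ hμ using _root_.exists_isRowMin (ρ := ρ) (σ := τ) ⟨m, hi.1⟩
  have hsurj : Set.SurjOn μ (Finset.univ : Finset I) τ := fun x hx =>
    let ⟨k, hk⟩ := hτ.exists_isRowMin hx
    ⟨k, Finset.mem_coe.2 (Finset.mem_univ k), (hμ k).eq hρ hk⟩
  have hinj := Finset.injOn_of_surjOn_of_card_le μ (fun k _ => (hμ k).1) hsurj hcard.ge
  exact hinj (Finset.mem_univ i) (Finset.mem_univ j) (((hμ i).eq hρ hi).trans (hj.eq hρ (hμ j)))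

theorem disjoint_pivotCandidates (hσ : IsDominant ρ σ) {a b : I} (hab : a ≠ b) :
    Disjoint (pivotCandidates ρ σ a) (pivotCandidates ρ σ b) := by
  refine Set.disjoint_left.2 fun y ha hb => ?_
  obtain ⟨k, hk⟩ := hσ y
  obtain ⟨x, hx, hlt⟩ : ∃ x ∈ σ, ρ k x < ρ k y := by
    by_cases hka : k = a
    · exact hb k (hka.trans_ne hab)
    · exact ha k hka
  exact (hk x hx).not_gt hlt

theorem isRowMin_of_mem_pivotCandidates (hσ : IsDominant ρ σ) {a : I} {y : T} (hy : y ∈ σ)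
    (hya : y ∈ pivotCandidates ρ σ a) : IsRowMin ρ σ a y := by
  obtain ⟨k, hk⟩ := hσ.exists_isRowMin hy
  suffices k = a from this ▸ hk
  by_contra hka
  obtain ⟨x, hx, hlt⟩ := hya k hka
  exact (hk.2 x hx).not_gt hlt

theorem notMem_of_mem_pivotCandidates (hρ : ∀ i, Function.Injective (ρ i)) (hσ : IsDominant ρ σ)
    {i j : I} (hij : i ≠ j) {m : T} (hi : IsRowMin ρ σ i m) (hj : IsRowMin ρ σ j m) {y : T}
    (hy : y ∈ pivotCandidates ρ σ i) : y ∉ σ := by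
  intro hyσ
  obtain rfl : y = m := (hσ.isRowMin_of_mem_pivotCandidates hyσ hy).eq hρ hi
  obtain ⟨x, hx, hlt⟩ := hy j hij.symm
  exact (hj.2 x hx).not_gt hlt

variable [DecidableEq T]

theorem insert_of_isPivot (hσ : IsDominant ρ σ) {a : I} {y : T} (hy : IsPivot ρ σ a y) :
    IsDominant ρ (insert y σ) := by
  intro z
  simp only [Finset.forall_mem_insert]
  by_cases hz : z ∈ pivotCandidates ρ σ a
  · obtain ⟨k, hk⟩ := hσ z
    obtain rfl : k = a := by
      by_contra hka
      obtain ⟨x, hx, hlt⟩ := hz k hka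
      exact (hk x hx).not_gt hlt
    exact ⟨k, hy.2 hz, hk⟩
  · simp only [pivotCandidates, Set.mem_ofPred_eq, not_forall, not_exists, not_and, not_lt] at hz
    obtain ⟨k, hka, hk⟩ := hz
    obtain ⟨x, hx, hlt⟩ := hy.1 k hka
    exact ⟨k, (hk x hx).trans hlt.le, hk⟩

theorem isPivot_of_isRowMin_insert [Fintype I] (hρ : ∀ i, Function.Injective (ρ i)) {a : I} {y : T}
    (hdom : IsDominant ρ (insert y σ)) (hcard : (insert y σ).card = Fintype.card I)
    (ha : IsRowMin ρ (insert y σ) a y) : IsPivot ρ σ a y := by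
  refine ⟨fun k hka => ?_, isMaxOn_iff.2 fun z hz => ?_⟩
  · obtain ⟨x, hx⟩ := _root_.exists_isRowMin (ρ := ρ) ⟨y, Finset.mem_insert_self y σ⟩ k
    have hxy : x ≠ y := by
      rintro rfl
      exact hka (hdom.isRowMin_row_injective hρ hcard hx ha)
    exact ⟨x, Finset.mem_of_mem_insert_of_ne hx.1 hxy,
      (hx.2 y (Finset.mem_insert_self y σ)).lt_of_ne ((hρ k).ne hxy)⟩
  · obtain ⟨k, hk⟩ := hdom z
    obtain rfl : k = a := by
      by_contra hka
      obtain ⟨x, hx, hlt⟩ := hz k hka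
      exact (hk x (Finset.mem_insert_of_mem hx)).not_gt hlt
    exact hk y (Finset.mem_insert_self y σ)

theorem exists_isPivot_of_insert [Fintype I] (hρ : ∀ i, Function.Injective (ρ i)) {y : T}
    (hdom : IsDominant ρ (insert y σ)) (hcard : (insert y σ).card = Fintype.card I) :
    ∃ a, IsPivot ρ σ a y :=
  (hdom.exists_isRowMin (Finset.mem_insert_self y σ)).imp fun _ ha =>
    hdom.isPivot_of_isRowMin_insert hρ hcard ha

theorem isPivot_or_isPivot_of_insert [Fintype I] (hρ : ∀ i, Function.Injective (ρ i)) {y : T}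
    (hdom : IsDominant ρ (insert y σ)) (hcard : (insert y σ).card = Fintype.card I)
    {i j : I} (hij : i ≠ j) {m : T} (hi : IsRowMin ρ σ i m) (hj : IsRowMin ρ σ j m) :
    IsPivot ρ σ i y ∨ IsPivot ρ σ j y := by
  obtain ⟨a, ha⟩ := hdom.exists_isPivot_of_insert hρ hcard
  by_cases hai : a = i
  · exact .inl (hai ▸ ha)
  by_cases haj : a = j
  · exact .inr (haj ▸ ha)
  have isRowMin_insert {k : I} (hka : k ≠ a) (hk : IsRowMin ρ σ k m) :
      IsRowMin ρ (insert y σ) k m := by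
    obtain ⟨x, hx, hlt⟩ := ha.1 k hka
    exact ⟨Finset.mem_insert_of_mem hk.1,
      Finset.forall_mem_insert _ _ _ |>.2 ⟨(hk.2 x hx).trans hlt.le, hk.2⟩⟩
  exact absurd (hdom.isRowMin_row_injective hρ hcard (isRowMin_insert (Ne.symm hai) hi)
    (isRowMin_insert (Ne.symm haj) hj)) hij

end IsDominant

/-- The elements `s i` are slack columns, as in Scarf's lemma: `s i` is the strict minimum of row
`i`, and in every other row it lies above all elements that are not slack. -/
structure IsSlack (ρ : I → T → L) (s : I → T) : Prop where
  lt_of_ne : ∀ {i : I} {x : T}, x ≠ s i → ρ i (s i) < ρ i x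
  lt_slack : ∀ {i k : I} {x : T}, k ≠ i → x ∉ Set.range s → ρ k x < ρ k (s i)

namespace IsSlack

variable {s : I → T}

theorem le (hs : IsSlack ρ s) (i : I) (x : T) : ρ i (s i) ≤ ρ i x := by
  rcases eq_or_ne x (s i) with rfl | hx
  · exact le_rfl
  · exact (hs.lt_of_ne hx).le

theorem isDominant_image_erase [Fintype I] [DecidableEq I] [DecidableEq T] (hs : IsSlack ρ s)
    (i₀ : I) : IsDominant ρ ((Finset.univ.erase i₀).image s) := by
  intro z
  by_cases hz : z ∈ Set.range s
  · obtain ⟨k, rfl⟩ := hz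
    exact ⟨k, fun x _ => hs.le k x⟩
  · simp only [Finset.forall_mem_image, Finset.mem_erase, Finset.mem_univ, and_true]
    exact ⟨i₀, fun j hj => (hs.lt_slack hj.symm hz).le⟩

theorem ncard_covBy_eq_two [Finite T] [Fintype I] (hρ : ∀ i, Function.Injective (ρ i))
    (hs : IsSlack ρ s) (hσ : IsDominant ρ σ) (hcard : σ.card + 1 = Fintype.card I) {x₀ : T}
    (hx₀ : x₀ ∈ σ) (hx₀s : x₀ ∉ Set.range s) :
    {τ | σ ⋖ τ ∧ IsDominant ρ τ}.ncard = 2 := by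
  classical
  obtain ⟨i, j, m, hij, hi, hj⟩ :=
    exists_ne_isRowMin_isRowMin (ρ := ρ) ⟨x₀, hx₀⟩ (Nat.lt_of_succ_le hcard.le)
  have hcand (a : I) : (pivotCandidates ρ σ a).Nonempty :=
    ⟨s a, fun k hk => ⟨x₀, hx₀, hs.lt_slack hk hx₀s⟩⟩
  obtain ⟨y, hy⟩ := exists_isPivot (hcand i)
  obtain ⟨z, hz⟩ := exists_isPivot (hcand j)
  have hyσ : y ∉ σ := hσ.notMem_of_mem_pivotCandidates hρ hij hi hj hy.1
  have hzσ : z ∉ σ := hσ.notMem_of_mem_pivotCandidates hρ hij.symm hj hi hz.1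
  have hyz : y ≠ z := (hσ.disjoint_pivotCandidates hij).ne_of_mem hy.1 hz.1
  refine Set.ncard_eq_two.2 ⟨insert y σ, insert z σ, fun h => ?_, ?_⟩
  · exact (Finset.mem_insert.1 (h ▸ Finset.mem_insert_self y σ)).elim hyz hyσ
  ext τ
  simp only [Set.mem_ofPred_eq, Set.mem_insert_iff, Set.mem_singleton_iff]
  constructor
  · rintro ⟨hcov, hτ⟩
    obtain ⟨w, hw, rfl⟩ := Finset.covBy_iff_exists_insert.1 hcov
    have hcard' : (insert w σ).card = Fintype.card I := by
      rw [Finset.card_insert_of_notMem hw, hcard]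
    refine (hτ.isPivot_or_isPivot_of_insert hρ hcard' hij hi hj).imp ?_ ?_ <;> intro h
    · rw [h.eq hρ hy]
    · rw [h.eq hρ hz]
  · rintro (rfl | rfl)
    · exact ⟨Finset.covBy_insert hyσ, hσ.insert_of_isPivot hy⟩
    · exact ⟨Finset.covBy_insert hzσ, hσ.insert_of_isPivot hz⟩

theorem ncard_image_erase_covBy_eq_one [Finite T] [Fintype I] [DecidableEq I] [DecidableEq T]
    (hρ : ∀ i, Function.Injective (ρ i)) (hs : IsSlack ρ s) (hinj : Function.Injective s) (i₀ : I) :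
    {τ | (Finset.univ.erase i₀).image s ⋖ τ ∧ IsDominant ρ τ}.ncard = 1 := by
  set σ := (Finset.univ.erase i₀).image s with hσ
  have hmem {k : I} (hk : k ≠ i₀) : s k ∈ σ := Finset.mem_image_of_mem s (by simpa using hk)
  have hcard : σ.card + 1 = Fintype.card I := by
    rw [hσ, Finset.card_image_of_injective _ hinj, Finset.card_erase_add_one (Finset.mem_univ i₀),
      Finset.card_univ]
  obtain ⟨y, hy⟩ : ∃ y, IsPivot ρ σ i₀ y :=
    exists_isPivot ⟨s i₀, fun k hk => ⟨s k, hmem hk, hs.lt_of_ne (hinj.ne hk.symm)⟩⟩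
  have hyσ : y ∉ σ := by
    simp only [hσ, Finset.mem_image, Finset.mem_erase, Finset.mem_univ, and_true, not_exists,
      not_and]
    rintro k hk rfl
    obtain ⟨x, -, hlt⟩ := hy.1 k hk
    exact (hs.le k x).not_gt hlt
  refine Set.ncard_eq_one.2 ⟨insert y σ, Set.eq_singleton_iff_unique_mem.2
    ⟨⟨Finset.covBy_insert hyσ, (hs.isDominant_image_erase i₀).insert_of_isPivot hy⟩, ?_⟩⟩
  rintro τ ⟨hcov, hτ⟩
  obtain ⟨w, hw, rfl⟩ := Finset.covBy_iff_exists_insert.1 hcov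
  obtain ⟨a, ha⟩ := hτ.exists_isPivot_of_insert hρ (by rw [Finset.card_insert_of_notMem hw, hcard])
  -- In row `i₀` all of `σ` lies above everything outside `σ`, so only `a = i₀` is possible.
  obtain rfl : a = i₀ := by
    by_contra hai
    obtain ⟨x, hx, hlt⟩ := ha.1 i₀ (Ne.symm hai)
    obtain ⟨j, hj, rfl⟩ := Finset.mem_image.1 hx
    by_cases hws : w ∈ Set.range s
    · obtain ⟨k, rfl⟩ := hws
      obtain rfl : k = i₀ := by_contra fun hk => hw (hmem hk)
      exact (hs.le k (s j)).not_gt hlt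
    · exact (hs.lt_slack (Finset.ne_of_mem_erase hj).symm hws).not_gt hlt
  rw [ha.eq hρ hy]

end IsSlack

end DominantSets

section Parity

theorem even_card_bipartiteAbove {α β : Type*} (r : α → β → Prop) [∀ a b, Decidable (r a b)]
    {s : Finset α} {t : Finset β} {a : α} (ha : a ∈ s)
    (ht : ∀ b ∈ t, Even (s.bipartiteBelow r b).card)
    (hs : ∀ a' ∈ s, a' ≠ a → Even (t.bipartiteAbove r a').card) :
    Even (t.bipartiteAbove r a).card := by
  classical
  have hsum := Finset.even_sum (s := t) _ ht
  rw [← Finset.sum_card_bipartiteAbove_eq_sum_card_bipartiteBelow, ← Finset.add_sum_erase _ _ ha]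
    at hsum
  refine (Nat.even_add.1 hsum).2 (Finset.even_sum _ fun a' ha' => ?_)
  exact hs a' (Finset.mem_of_mem_erase ha') (Finset.ne_of_mem_erase ha')

variable {T I : Type*} [DecidableEq I] {c : T → I} {τ : Finset T}

theorem image_erase_eq_image_iff [DecidableEq T] {x : T} (hx : x ∈ τ) :
    (τ.erase x).image c = τ.image c ↔ ∃ y ∈ τ.erase x, c y = c x := by
  rw [← Finset.mem_image]
  constructor
  · intro h
    exact h ▸ Finset.mem_image_of_mem c hx
  · intro h
    rw [← Finset.insert_eq_of_mem h, ← Finset.image_insert, Finset.insert_erase hx]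

theorem card_filter_image_erase_eq_two [DecidableEq T]
    (h : (τ.image c).card + 1 = τ.card) :
    {x ∈ τ | (τ.erase x).image c = τ.image c}.card = 2 := by
  obtain ⟨x, hx, x', hx', hne, hc⟩ := Finset.exists_ne_map_eq_of_card_lt_of_maps_to
    (Nat.lt_of_succ_le h.le) fun _ => Finset.mem_image_of_mem c
  have hx'_mem : x' ∈ τ.erase x := Finset.mem_erase.2 ⟨hne.symm, hx'⟩
  have hx_mem : x ∈ τ.erase x' := Finset.mem_erase.2 ⟨hne, hx⟩
  have himage := (image_erase_eq_image_iff hx).2 ⟨x', hx'_mem, hc.symm⟩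
  have hinj : Set.InjOn c (τ.erase x : Finset T) := by
    rw [← Finset.card_image_iff, himage, Finset.card_erase_of_mem hx, ← h, Nat.add_sub_cancel]
  refine Finset.card_eq_two.2 ⟨x, x', hne, ?_⟩
  ext y
  simp only [Finset.mem_filter, Finset.mem_insert, Finset.mem_singleton]
  constructor
  · rintro ⟨hy, hy_image⟩
    by_contra! hyx
    have hy_mem : y ∈ τ.erase x := Finset.mem_erase.2 ⟨hyx.1, hy⟩
    obtain ⟨z, hz, hzy⟩ := (image_erase_eq_image_iff hy).1 hy_image
    obtain ⟨hzy_ne, hz⟩ := Finset.mem_erase.1 hz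
    by_cases hzx : z = x
    · exact hyx.2 (hinj hy_mem hx'_mem (by rw [← hzy, hzx, hc]))
    · exact hzy_ne (hinj (Finset.mem_erase.2 ⟨hzx, hz⟩) hy_mem hzy)
  · rintro (rfl | rfl)
    · exact ⟨hx, himage⟩
    · exact ⟨hx', (image_erase_eq_image_iff hx').2 ⟨x, hx_mem, hc⟩⟩

theorem even_ncard_covBy_image_eq {C : Finset I} (hC : C.card + 1 = τ.card)
    (hτ : (τ.image c).card < τ.card) : Even {σ | σ ⋖ τ ∧ σ.image c = C}.ncard := by
  classical
  have himage : {σ | σ ⋖ τ ∧ σ.image c = C} =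
      τ.erase '' ({x ∈ τ | (τ.erase x).image c = C} : Finset T) := by
    ext σ
    simp only [Set.mem_ofPred_eq, Set.mem_image, Finset.coe_filter,
      Finset.covBy_iff_exists_erase]
    grind
  rw [himage, ((Finset.erase_injOn τ).mono (Finset.filter_subset _ τ)).ncard_image,
    Set.ncard_coe_finset]
  by_cases hCτ : τ.image c = C
  · rw [← hCτ, card_filter_image_erase_eq_two (by rw [hCτ, hC])]
    exact even_two
  · rw [Finset.filter_false_of_mem, Finset.card_empty]
    · exact Even.zero
    · intro x _ hx
      refine hCτ (Finset.eq_of_subset_of_card_le ?_ (by lia)).symm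
      exact hx ▸ Finset.image_subset_image (Finset.erase_subset x τ)

theorem even_ncard_covBy_of_isLowerSet [Finite T] {K : Set (Finset T)} (hK : IsLowerSet K)
    {C : Finset I} (hdefect : ∀ τ ∈ K, τ.card = C.card + 1 → (τ.image c).card < τ.card)
    {σ₀ : Finset T} (hσ₀ : σ₀ ∈ K) (himage : σ₀.image c = C) (hcard : σ₀.card = C.card)
    (heven : ∀ σ ∈ K, σ.image c = C → σ.card = C.card → σ ≠ σ₀ →
      Even {τ | σ ⋖ τ ∧ τ ∈ K}.ncard) :
    Even {τ | σ₀ ⋖ τ ∧ τ ∈ K}.ncard := by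
  classical
  have := Fintype.ofFinite T
  let D : Finset (Finset T) := {σ | σ ∈ K ∧ σ.image c = C ∧ σ.card = C.card}
  let R : Finset (Finset T) := {τ | τ ∈ K ∧ τ.card = C.card + 1}
  have above_eq {σ : Finset T} (hσ : σ.card = C.card) :
      (R.bipartiteAbove (· ⋖ ·) σ).card = {τ | σ ⋖ τ ∧ τ ∈ K}.ncard := by
    rw [← Set.ncard_coe_finset]
    congr! 1
    ext τ
    simp only [R, Finset.coe_bipartiteAbove, Finset.mem_filter_univ, Set.mem_ofPred_eq]
    refine ⟨fun h => ⟨h.2, h.1.1⟩, fun h => ⟨⟨h.2, ?_⟩, h.1⟩⟩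
    rw [← hσ, Nat.covBy_iff_add_one_eq.1 h.1.card_finset]
  have below_eq {τ : Finset T} (hτK : τ ∈ K) (hτ : τ.card = C.card + 1) :
      (D.bipartiteBelow (· ⋖ ·) τ).card = {σ | σ ⋖ τ ∧ σ.image c = C}.ncard := by
    rw [← Set.ncard_coe_finset]
    congr! 1
    ext σ
    simp only [D, Finset.coe_bipartiteBelow, Finset.mem_filter_univ, Set.mem_ofPred_eq]
    refine ⟨fun h => ⟨h.2, h.1.2.1⟩, fun h => ⟨⟨hK h.1.le hτK, h.2, ?_⟩, h.1⟩⟩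
    rw [← Nat.add_right_cancel_iff (n := 1), ← hτ, Nat.covBy_iff_add_one_eq.1 h.1.card_finset]
  rw [← above_eq hcard]
  refine even_card_bipartiteAbove (s := D) _ ((Finset.mem_filter_univ _).2 ⟨hσ₀, himage, hcard⟩)
    (fun τ hτ => ?_) fun σ hσ hne => ?_
  · obtain ⟨hτK, hτ⟩ := (Finset.mem_filter_univ _).1 hτ
    rw [below_eq hτK hτ]
    exact even_ncard_covBy_image_eq hτ.symm (hdefect τ hτK hτ)
  · obtain ⟨hσK, hσ_image, hσ⟩ := (Finset.mem_filter_univ _).1 hσ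
    rw [above_eq hσ]
    exact heven σ hσK hσ_image hσ hne

end Parity

section Scarf

variable {T I : Type*}

theorem exists_notMem_range_of_ne_image_erase [Fintype I] [DecidableEq T] [DecidableEq I]
    {s : I → T} {c : T → I} (hc : Function.LeftInverse c s) {i₀ : I} {σ : Finset T}
    (hσ : σ.image c = Finset.univ.erase i₀) (hcard : σ.card + 1 = Fintype.card I)
    (hne : σ ≠ (Finset.univ.erase i₀).image s) : ∃ x ∈ σ, x ∉ Set.range s := by
  by_contra! hrange
  refine hne (Finset.eq_of_subset_of_card_le (fun x hx => ?_) ?_)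
  · obtain ⟨j, rfl⟩ := hrange x hx
    exact Finset.mem_image_of_mem s (hσ ▸ hc j ▸ Finset.mem_image_of_mem c hx)
  · rw [Finset.card_image_of_injective _ hc.injective, Finset.card_erase_of_mem
      (Finset.mem_univ i₀), Finset.card_univ, ← hcard, Nat.add_sub_cancel]

theorem IsSlack.exists_isDominant_image_eq_univ {L : Type*} [LinearOrder L]
    [Finite T] [Fintype I] [Nonempty I] [DecidableEq I] {ρ : I → T → L}
    (hρ : ∀ i, Function.Injective (ρ i)) {s : I → T} (hs : IsSlack ρ s) {c : T → I}
    (hc : Function.LeftInverse c s) :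
    ∃ τ, IsDominant ρ τ ∧ τ.image c = Finset.univ := by
  classical
  obtain ⟨i₀⟩ := ‹Nonempty I›
  by_contra! hcon
  have hC : (Finset.univ.erase i₀).card + 1 = Fintype.card I :=
    Finset.card_erase_add_one (Finset.mem_univ i₀)
  have heven : Even {τ | (Finset.univ.erase i₀).image s ⋖ τ ∧ IsDominant ρ τ}.ncard := by
    refine even_ncard_covBy_of_isLowerSet (K := {τ | IsDominant ρ τ}) (c := c)
      (C := Finset.univ.erase i₀) (fun τ σ hστ hτ => IsDominant.anti hστ hτ) (fun τ hτ hcard => ?_)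
      (hs.isDominant_image_erase i₀) ?_ (Finset.card_image_of_injective _ hc.injective)
      fun σ hσ himage hcard hne => ?_
    · rw [hcard, hC]
      exact (Finset.card_lt_iff_ne_univ _).2 (hcon τ hτ)
    · rw [Finset.image_image, hc.comp_eq_id, Finset.image_id]
    · obtain ⟨x₀, hx₀, hx₀s⟩ := exists_notMem_range_of_ne_image_erase hc himage (hcard ▸ hC) hne
      exact (hs.ncard_covBy_eq_two hρ hσ (hcard ▸ hC) hx₀ hx₀s) ▸ even_two
  rw [hs.ncard_image_erase_covBy_eq_one hρ hc.injective] at heven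
  exact Nat.not_even_one heven

variable {L N : Type*} [DecidableEq I]

/-- The rows `ρ` with a slack column `Sum.inr i` adjoined for each row `i`, and with ties broken by
the enumeration `e` of the columns. -/
def withSlack (ρ : I → T → L) (e : T ⊕ I → N) (i : I) (t : T ⊕ I) : WithTop (WithBot L) ×ₗ N :=
  toLex (t.elim (fun x => ↑(↑(ρ i x) : WithBot L)) fun j => if i = j then ⊥ else ⊤, e t)

theorem withSlack_injective (ρ : I → T → L) {e : T ⊕ I → N} (he : Function.Injective e) (i : I) :
    Function.Injective (withSlack ρ e i) := fun _ _ h =>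
  he (Prod.ext_iff.1 (toLex.injective h)).2

variable [LinearOrder L] [LinearOrder N]

theorem isSlack_withSlack (ρ : I → T → L) (e : T ⊕ I → N) : IsSlack (withSlack ρ e) Sum.inr := by
  constructor
  · rintro i (x | j) hx <;> refine Prod.Lex.toLex_lt_toLex.2 (.inl ?_)
    · simpa using WithTop.coe_lt_coe.2 (WithBot.bot_lt_coe (ρ i x))
    · simp [show i ≠ j from fun h => hx (h ▸ rfl)]
  · rintro i k (x | j) hk hx
    · exact Prod.Lex.toLex_lt_toLex.2 (.inl (by simp [hk]))
    · exact absurd ⟨j, rfl⟩ hx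

theorem le_of_withSlack_inl_le_inl {ρ : I → T → L} {e : T ⊕ I → N} {i : I} {x y : T}
    (h : withSlack ρ e i (.inl y) ≤ withSlack ρ e i (.inl x)) : ρ i y ≤ ρ i x := by
  simpa using (Prod.Lex.toLex_le_toLex.1 h).elim le_of_lt fun h => h.1.le

theorem scarf_lemma [Finite T] [Finite I] (ρ : I → T → L) (c : T → I) :
    ∃ σ : Finset T, ∀ y, ∃ i ∈ σ.image c, ∀ x ∈ σ, ρ i y ≤ ρ i x := by
  cases isEmpty_or_nonempty T
  · exact ⟨∅, isEmptyElim⟩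
  have : Nonempty I := ‹Nonempty T›.map c
  have := Fintype.ofFinite T
  have := Fintype.ofFinite I
  let e := Fintype.equivFin (T ⊕ I)
  obtain ⟨τ, hτ, himage⟩ := (isSlack_withSlack ρ e).exists_isDominant_image_eq_univ
    (withSlack_injective ρ e.injective) (c := Sum.elim c id) fun _ => rfl
  refine ⟨τ.toLeft, fun y => ?_⟩
  obtain ⟨i, hi⟩ := hτ (.inl y)
  refine ⟨i, ?_, fun x hx => le_of_withSlack_inl_le_inl (hi _ (Finset.mem_toLeft.1 hx))⟩
  obtain ⟨t, ht, hti⟩ := Finset.mem_image.1 (himage ▸ Finset.mem_univ i)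
  rcases t with x | j
  · exact Finset.mem_image.2 ⟨x, Finset.mem_toLeft.2 ht, hti⟩
  · obtain rfl : j = i := hti
    exact absurd (hi _ ht) ((isSlack_withSlack ρ e).lt_of_ne Sum.inl_ne_inr).not_ge

end Scarf

section Sperner

variable {I : Type*} [Fintype I]

theorem exists_le_sum_eq [Nonempty I] {a : I → ℕ} {k : ℕ} (h : ∑ i, a i ≤ k) :
    ∃ y, a ≤ y ∧ ∑ i, y i = k := by
  classical
  obtain ⟨i₀⟩ := ‹Nonempty I›
  refine ⟨a + Pi.single i₀ (k - ∑ i, a i), le_self_add, ?_⟩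
  simp [Finset.sum_add_distrib, h]

theorem exists_forall_le_lt_sum_add_card (k : ℕ) (c : (I → ℕ) → I) :
    ∃ (σ : Finset (I → ℕ)) (b : I → ℕ), σ.Nonempty ∧ (∀ x ∈ σ, ∑ i, x i = k ∧ b ≤ x) ∧
      k < ∑ i, b i + Fintype.card I ∧ ∀ i, b i ≠ 0 → ∃ x ∈ σ, c x = i := by
  classical
  have : Nonempty I := ⟨c 0⟩
  let T := {x : I → ℕ // x ∈ Finset.piAntidiag Finset.univ k}
  have : Finite T := (Finset.finite_toSet _).to_subtype
  have hT (x : T) : ∑ i, x.1 i = k := (Finset.mem_piAntidiag.1 x.2).1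
  have exists_ge {a : I → ℕ} (ha : ∑ i, a i ≤ k) : ∃ y : T, a ≤ y.1 := by
    obtain ⟨y, hay, hy⟩ := exists_le_sum_eq ha
    exact ⟨⟨y, Finset.mem_piAntidiag.2 ⟨hy, by simp⟩⟩, hay⟩
  obtain ⟨σ, hσ⟩ := scarf_lemma (fun i (x : T) => x.1 i) fun x => c x.1
  have hne : σ.Nonempty := by
    obtain ⟨y, -⟩ := exists_ge (a := 0) (by simp)
    obtain ⟨i, hi, -⟩ := hσ y
    exact Finset.image_nonempty.1 ⟨i, hi⟩
  choose μ hμ hmin using fun i => σ.exists_min_image (fun x => x.1 i) hne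
  let b : I → ℕ := fun i => if i ∈ σ.image (fun x => c x.1) then (μ i).1 i else 0
  let a : I → ℕ := fun i => if i ∈ σ.image (fun x => c x.1) then (μ i).1 i + 1 else 0
  have hb {x : T} (hx : x ∈ σ) : b ≤ x.1 := fun i => by
    simp only [b]
    split_ifs
    exacts [hmin i x hx, Nat.zero_le _]
  have hka : k < ∑ i, a i := by
    by_contra! hle
    obtain ⟨y, hay⟩ := exists_ge hle
    obtain ⟨i, hi, hyi⟩ := hσ y
    exact (hyi _ (hμ i)).not_gt ((if_pos hi).ge.trans (hay i))
  have hkb : k < ∑ i, b i + Fintype.card I := by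
    refine hka.trans_le ?_
    rw [Fintype.card_eq_sum_ones, ← Finset.sum_add_distrib]
    exact Finset.sum_le_sum fun i _ => by simp only [a, b]; split_ifs <;> simp
  refine ⟨σ.image Subtype.val, b, hne.image _, ?_, hkb, fun i hi => ?_⟩
  · exact Finset.forall_mem_image.2 fun x hx => ⟨hT x, hb hx⟩
  · obtain ⟨x, hx, hxi⟩ := Finset.mem_image.1 (by_contra fun h => hi (if_neg h))
    exact ⟨x, Finset.mem_image_of_mem _ hx, hxi⟩

-- Discrete form of Sperner's lemma: `σ` is the vertex set of a cell of bounded size, and only the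
-- colours of coordinates that almost vanish on it may be missing.
theorem exists_cell_forall_exists_color (k : ℕ) (c : (I → ℕ) → I) :
    ∃ (σ : Finset (I → ℕ)) (b : I → ℕ), σ.Nonempty ∧
      (∀ x ∈ σ, ∑ i, x i = k ∧ b ≤ x ∧ ∀ i, x i < b i + Fintype.card I) ∧
      ∀ i, b i ≠ 0 → ∃ x ∈ σ, c x = i := by
  obtain ⟨σ, b, hne, hσ, hk, hb⟩ := exists_forall_le_lt_sum_add_card k c
  refine ⟨σ, b, hne, fun x hx => ⟨(hσ x hx).1, (hσ x hx).2, fun i => ?_⟩, hb⟩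
  obtain ⟨hsum, hbx⟩ := hσ x hx
  have hsub : x i - b i ≤ k - ∑ j, b j := by
    rw [← hsum, ← Finset.sum_tsub_distrib _ fun j _ => hbx j]
    exact Finset.single_le_sum (f := fun j => x j - b j) (fun _ _ => Nat.zero_le _)
      (Finset.mem_univ i)
  have hbx_sum : ∑ j, b j ≤ ∑ j, x j := Finset.sum_le_sum fun j _ => hbx j
  have := hbx i
  lia

theorem exists_mem_stdSimplex_forall_le_or_exists_dist_le {F : I → Set (I → ℝ)}
    (hcover : stdSimplex ℝ I ⊆ ⋃ i, F i) [Nonempty I] {k : ℕ} (hk : 0 < k) :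
    ∃ z ∈ stdSimplex ℝ I, ∀ i, z i ≤ Fintype.card I / k ∨
      ∃ w ∈ F i, dist w z ≤ Fintype.card I / k := by
  classical
  have hk' : (0 : ℝ) < k := Nat.cast_pos.2 hk
  let pt (x : I → ℕ) : I → ℝ := fun i => x i / k
  have hpt {x : I → ℕ} (hx : ∑ i, x i = k) : pt x ∈ stdSimplex ℝ I := by
    refine ⟨fun i => by positivity, ?_⟩
    simp only [pt, ← Finset.sum_div, ← Nat.cast_sum, hx, div_self hk'.ne']
  have hcolor (x : I → ℕ) : ∃ i, ∑ i, x i = k → pt x ∈ F i := by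
    by_cases hx : ∑ i, x i = k
    · simpa [hx] using hcover (hpt hx)
    · simp [hx]
  choose c hc using hcolor
  obtain ⟨σ, b, ⟨x, hx⟩, hσ, hb⟩ := exists_cell_forall_exists_color k c
  refine ⟨pt x, hpt (hσ x hx).1, fun i => ?_⟩
  by_cases hi : b i = 0
  · left
    have := (hσ x hx).2.2 i
    rw [hi, zero_add] at this
    exact div_le_div_of_nonneg_right (Nat.cast_le.2 this.le) hk'.le
  · right
    obtain ⟨w, hw, rfl⟩ := hb i hi
    refine ⟨pt w, hc w (hσ w hw).1, (dist_pi_le_iff (by positivity)).2 fun j => ?_⟩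
    obtain ⟨-, hbx, hxb⟩ := hσ x hx
    obtain ⟨-, hbw, hwb⟩ := hσ w hw
    rw [Real.dist_eq, ← sub_div, abs_div, abs_of_pos hk']
    refine div_le_div_of_nonneg_right ?_ hk'.le
    have hxj := hxb j
    have hwj := hwb j
    have hbxj := hbx j
    have hbwj := hbw j
    rw [abs_sub_le_iff, sub_le_iff_le_add, sub_le_iff_le_add]
    constructor <;> norm_cast <;> lia

theorem exists_mem_stdSimplex_forall_mem [Nonempty I] {F : I → Set (I → ℝ)}
    (hF : ∀ i, IsClosed (F i)) (hcover : stdSimplex ℝ I ⊆ ⋃ i, F i)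
    (hface : ∀ i, ∀ x ∈ stdSimplex ℝ I, x i = 0 → x ∈ F i) :
    ∃ x ∈ stdSimplex ℝ I, ∀ i, x ∈ F i := by
  choose z hz happrox using fun k : ℕ =>
    exists_mem_stdSimplex_forall_le_or_exists_dist_le hcover k.succ_pos
  obtain ⟨x, hx, φ, hφ, hlim⟩ := (isCompact_stdSimplex ℝ I).tendsto_subseq hz
  refine ⟨x, hx, fun i => ?_⟩
  by_cases hxi : x i = 0
  · exact hface i x hx hxi
  have hscale : Filter.Tendsto (fun k => (Fintype.card I : ℝ) / (φ k).succ) .atTop (nhds 0) :=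
    ((tendsto_const_div_atTop_nhds_zero_nat _).comp (Filter.tendsto_add_atTop_nat 1)).comp
      hφ.tendsto_atTop
  refine (hF i).closure_subset (Metric.mem_closure_iff.2 fun ε hε => ?_)
  have hfar : ∀ᶠ k in .atTop, (Fintype.card I : ℝ) / (φ k).succ < z (φ k) i :=
    hscale.eventually_lt (tendsto_pi_nhds.1 hlim i) ((hx.1 i).lt_of_ne' hxi)
  have hnear : ∀ᶠ k in .atTop, dist x (z (φ k)) + Fintype.card I / (φ k).succ < ε := by
    have : Filter.Tendsto (fun k => dist x (z (φ k)) + (Fintype.card I : ℝ) / (φ k).succ)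
        .atTop (nhds 0) := by
      simpa using ((tendsto_const_nhds (x := x)).dist hlim).add hscale
    exact this.eventually_lt_const hε
  obtain ⟨k, hk, hkε⟩ := (hfar.and hnear).exists
  obtain ⟨w, hw, hwz⟩ := (happrox (φ k) i).resolve_left hk.not_ge
  refine ⟨w, hw, (dist_triangle_right _ _ (z (φ k))).trans_lt ?_⟩
  linarith

end Sperner

section Brouwer

theorem exists_mem_stdSimplex_isFixedPt {I : Type*} [Fintype I] [Nonempty I]
    {f : (I → ℝ) → (I → ℝ)} (hf : ContinuousOn f (stdSimplex ℝ I))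
    (hmaps : Set.MapsTo f (stdSimplex ℝ I) (stdSimplex ℝ I)) :
    ∃ x ∈ stdSimplex ℝ I, Function.IsFixedPt f x := by
  let F (i : I) : Set (I → ℝ) := {x ∈ stdSimplex ℝ I | x i ≤ f x i}
  have hF (i : I) : IsClosed (F i) := (isClosed_stdSimplex ℝ I).isClosed_le
    (continuous_apply i).continuousOn ((continuous_apply i).comp_continuousOn hf)
  have hcover : stdSimplex ℝ I ⊆ ⋃ i, F i := fun x hx => by
    obtain ⟨i, -, hi⟩ := Finset.exists_le_of_sum_le (f := x) (g := f x)
      Finset.univ_nonempty (hx.2.trans (hmaps hx).2.symm).le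
    exact Set.mem_iUnion.2 ⟨i, hx, hi⟩
  obtain ⟨x, hx, hxF⟩ := exists_mem_stdSimplex_forall_mem hF hcover
    fun i x hx hxi => ⟨hx, hxi ▸ (hmaps hx).1 i⟩
  refine ⟨x, hx, funext fun i => ?_⟩
  have hsum : ∑ i, x i = ∑ i, f x i := hx.2.trans (hmaps hx).2.symm
  exact ((Finset.sum_eq_sum_iff_of_le fun i _ => (hxF i).2).1 hsum i (Finset.mem_univ i)).symm

-- Scale the box so that its coordinate sums stay below one; the spare coordinate `none` takes up
-- the slack, and clipping gives the retraction.
theorem exists_mem_Icc_pi_isFixedPt {ι : Type*} [Finite ι] {a b : ι → ℝ} (hab : a ≤ b)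
    {g : (ι → ℝ) → (ι → ℝ)} (hg : ContinuousOn g (Set.Icc a b))
    (hmaps : Set.MapsTo g (Set.Icc a b) (Set.Icc a b)) :
    ∃ x ∈ Set.Icc a b, Function.IsFixedPt g x := by
  have := Fintype.ofFinite ι
  let M : ℝ := 1 + ∑ i, (b i - a i)
  have hM : 0 < M := by
    have : 0 ≤ ∑ i, (b i - a i) := Finset.sum_nonneg fun i _ => sub_nonneg.2 (hab i)
    positivity
  let e (x : ι → ℝ) (o : Option ι) : ℝ :=
    o.elim (1 - (∑ i, (x i - a i)) / M) fun i => (x i - a i) / M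
  let r (y : Option ι → ℝ) (i : ι) : ℝ := max (a i) (min (b i) (a i + M * y (some i)))
  have hr_mem (y : Option ι → ℝ) : r y ∈ Set.Icc a b :=
    ⟨fun _ => le_max_left _ _, fun i => max_le (hab i) (min_le_left _ _)⟩
  have hre {x : ι → ℝ} (hx : x ∈ Set.Icc a b) : r (e x) = x := by
    ext i
    simp [r, e, mul_div_cancel₀ _ hM.ne', hx.1 i, hx.2 i]
  have he_mem {x : ι → ℝ} (hx : x ∈ Set.Icc a b) : e x ∈ stdSimplex ℝ (Option ι) := by
    refine ⟨?_, by simp [Fintype.sum_option, e, ← Finset.sum_div]⟩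
    rintro (_ | i)
    · have : ∑ i, (x i - a i) ≤ ∑ i, (b i - a i) :=
        Finset.sum_le_sum fun i _ => sub_le_sub_right (hx.2 i) _
      exact sub_nonneg.2 ((div_le_one hM).2 (by linarith))
    · exact div_nonneg (sub_nonneg.2 (hx.1 i)) hM.le
  have he : Continuous e := by
    refine continuous_pi ?_
    rintro (_ | i) <;> simp only [e, Option.elim] <;> fun_prop
  have hr : Continuous r := by fun_prop
  obtain ⟨y, -, hy⟩ := exists_mem_stdSimplex_isFixedPt (f := fun y => e (g (r y)))
    (he.comp (hg.comp_continuous hr hr_mem)).continuousOn fun y _ => he_mem (hmaps (hr_mem y))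
  refine ⟨r y, hr_mem y, ?_⟩
  calc g (r y) = r (e (g (r y))) := (hre (hmaps (hr_mem y))).symm
    _ = r y := congrArg r hy

end Brouwer

section NegativeType

open scoped Matrix

/-- `D` is a matrix of strict negative type: its quadratic form is negative definite on the vectors
of coordinate sum zero. By Schoenberg, a symmetric matrix with zero diagonal is of this kind exactly
when it consists of the squared distances between affinely independent points of a Euclidean
space. -/
def IsStrictlyNegType {ι : Type*} [Fintype ι] (D : Matrix ι ι ℝ) : Prop :=
  ∀ x : ι → ℝ, ∑ i, x i = 0 → x ≠ 0 → x ⬝ᵥ D *ᵥ x < 0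

/-- The matrix of squared distances between the points `p i`. -/
def sqDistMatrix {ι P : Type*} [Dist P] (p : ι → P) : Matrix ι ι ℝ :=
  Matrix.of fun i j => dist (p i) (p j) ^ 2

/-- The squared distance matrix of one more point, the index `Sum.inr ()`, whose squared distances
to the points behind `D` are given by `a`. -/
def adjoinPoint {ι : Type*} (D : Matrix ι ι ℝ) (a : ι → ℝ) : Matrix (ι ⊕ Unit) (ι ⊕ Unit) ℝ :=
  Matrix.fromBlocks D (Matrix.replicateCol Unit a) (Matrix.replicateRow Unit a) 0

variable {ι : Type*}

theorem sqDistMatrix_isSymm {P : Type*} [PseudoMetricSpace P] (p : ι → P) :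
    (sqDistMatrix p).IsSymm :=
  Matrix.IsSymm.ext fun i j => by simp only [sqDistMatrix, Matrix.of_apply, dist_comm]

theorem sqDistMatrix_apply_self {P : Type*} [PseudoMetricSpace P] (p : ι → P) (i : ι) :
    sqDistMatrix p i i = 0 := by
  simp only [sqDistMatrix, Matrix.of_apply, dist_self, zero_pow two_ne_zero]

variable {D : Matrix ι ι ℝ} {a : ι → ℝ}

theorem adjoinPoint_mem_of_ne {s : Set ℝ} (hD : Pairwise fun i j => D i j ∈ s)
    (ha : ∀ i, a i ∈ s) : Pairwise fun i j => adjoinPoint D a i j ∈ s := by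
  rintro (i | _) (j | _) hij
  · exact hD (ne_of_apply_ne Sum.inl hij)
  · exact ha i
  · exact ha j
  · exact absurd rfl hij

theorem adjoinPoint_apply_self (hD : ∀ i, D i i = 0) (i : ι ⊕ Unit) :
    adjoinPoint D a i i = 0 := by
  rcases i with i | _
  exacts [hD i, rfl]

theorem mul_apply_mul_le_of_mem_Icc [DecidableEq ι] {u v : ℝ} (hdiag : ∀ i, D i i = 0)
    (hD : Pairwise fun i j => D i j ∈ Set.Icc u v) (x : ι → ℝ) (i j : ι) :
    x i * (D i j * x j) ≤ (u + v) / 2 * (x i * x j) + (v - u) / 2 * (|x i| * |x j|)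
      - if i = j then v * x i ^ 2 else 0 := by
  split_ifs with hij
  · rw [← hij, hdiag, abs_mul_abs_self]
    exact le_of_eq (by ring)
  · have hdev : |D i j - (u + v) / 2| ≤ (v - u) / 2 := by
      rw [abs_le]
      constructor <;> linarith [(hD hij).1, (hD hij).2]
    have hxD : x i * x j * (D i j - (u + v) / 2) ≤ |x i| * |x j| * ((v - u) / 2) := by
      rw [← abs_mul]
      exact (le_abs_self _).trans ((abs_mul _ _).trans_le (by gcongr))
    linarith

variable [Fintype ι]

-- Compare `D` with the constant matrix `(u + v) / 2`, whose form vanishes on these vectors, and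
-- bound the deviation by Cauchy–Schwarz.
theorem isStrictlyNegType_of_mem_Icc {u v : ℝ} (huv : u ≤ v)
    (hcard : Fintype.card ι * (v - u) < 2 * v) (hdiag : ∀ i, D i i = 0)
    (hD : Pairwise fun i j => D i j ∈ Set.Icc u v) : IsStrictlyNegType D := by
  classical
  intro x hsum hx
  have hpos : 0 < ∑ i, x i ^ 2 := by
    obtain ⟨i, hi⟩ := Function.ne_iff.1 hx
    exact Finset.sum_pos' (fun i _ => sq_nonneg _) ⟨i, Finset.mem_univ i, sq_pos_of_ne_zero hi⟩
  have hcs : (∑ i, |x i|) ^ 2 ≤ Fintype.card ι * ∑ i, x i ^ 2 := by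
    simpa only [sq_abs, Finset.card_univ] using
      sq_sum_le_card_mul_sum_sq (s := Finset.univ) (f := fun i => |x i|)
  calc x ⬝ᵥ D *ᵥ x = ∑ i, ∑ j, x i * (D i j * x j) := by
        simp only [dotProduct, Matrix.mulVec, Finset.mul_sum]
    _ ≤ ∑ i, ∑ j, ((u + v) / 2 * (x i * x j) + (v - u) / 2 * (|x i| * |x j|)
          - if i = j then v * x i ^ 2 else 0) :=
        Finset.sum_le_sum fun i _ => Finset.sum_le_sum fun j _ =>
          mul_apply_mul_le_of_mem_Icc hdiag hD x i j
    _ = (u + v) / 2 * (∑ i, x i) ^ 2 + (v - u) / 2 * (∑ i, |x i|) ^ 2 - v * ∑ i, x i ^ 2 := by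
        simp only [Finset.sum_sub_distrib, Finset.sum_add_distrib, ← Finset.mul_sum,
          Finset.sum_ite_eq, Finset.mem_univ, if_true, sq, Finset.sum_mul_sum]
    _ ≤ (v - u) / 2 * (Fintype.card ι * ∑ i, x i ^ 2) - v * ∑ i, x i ^ 2 := by
        rw [hsum, zero_pow two_ne_zero, mul_zero, zero_add]
        have := sub_nonneg.2 huv
        gcongr
    _ < 0 := by linarith [mul_lt_mul_of_pos_right hcard hpos]

theorem adjoinPoint_dotProduct_mulVec (l : ι → ℝ) :
    Sum.elim l (fun _ => -1) ⬝ᵥ adjoinPoint D a *ᵥ Sum.elim l (fun _ => -1) =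
      l ⬝ᵥ D *ᵥ l - 2 * l ⬝ᵥ a := by
  have hcol : Matrix.replicateCol Unit a *ᵥ (fun _ => -1) = -a := by
    ext; simp [Matrix.mulVec, dotProduct]
  have hrow : Matrix.replicateRow Unit a *ᵥ l = fun _ => l ⬝ᵥ a := by
    ext; simp [Matrix.mulVec, dotProduct_comm]
  simp only [adjoinPoint, Matrix.fromBlocks_mulVec, Sum.elim_comp_inl, Sum.elim_comp_inr, hcol,
    hrow, Matrix.zero_mulVec, add_zero, sumElim_dotProduct_sumElim, dotProduct_add, dotProduct_neg,
    dotProduct_pUnit, neg_mul, one_mul]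
  ring

theorem IsStrictlyNegType.dotProduct_mulVec_lt (h : IsStrictlyNegType (adjoinPoint D a))
    {l : ι → ℝ} (hl : ∑ i, l i = 1) : l ⬝ᵥ D *ᵥ l < 2 * l ⬝ᵥ a := by
  have := h (Sum.elim l fun _ => -1) (by simp [hl])
    fun h0 => by simpa using congrFun h0 (Sum.inr ())
  rwa [adjoinPoint_dotProduct_mulVec, sub_neg] at this

variable (D) in
/-- The linear map of the Cayley–Menger matrix, that is of `D` bordered by ones. -/
def cayleyMengerMap : (ι → ℝ) × ℝ →ₗ[ℝ] (ι → ℝ) × ℝ where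
  toFun z := (D *ᵥ z.1 + fun _ => z.2, ∑ i, z.1 i)
  map_add' z w := by
    ext <;> simp [Matrix.mulVec_add, Finset.sum_add_distrib, add_add_add_comm]
  map_smul' s z := by
    ext <;> simp [Matrix.mulVec_smul, Finset.mul_sum]

theorem IsStrictlyNegType.cayleyMengerMap_injective [Nonempty ι] (hD : IsStrictlyNegType D) :
    Function.Injective (cayleyMengerMap D) := by
  rw [injective_iff_map_eq_zero]
  rintro ⟨l, t⟩ h
  obtain ⟨hmul, hsum⟩ : (D *ᵥ l + fun _ => t) = 0 ∧ ∑ i, l i = 0 := Prod.mk_eq_zero.1 h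
  have hform : l ⬝ᵥ D *ᵥ l = 0 := by
    rw [eq_neg_of_add_eq_zero_left hmul, dotProduct_neg, neg_eq_zero, dotProduct,
      ← Finset.sum_mul, hsum, zero_mul]
  have hl : l = 0 := by
    by_contra hne
    exact (hD l hsum hne).ne hform
  have ht : t = 0 := by simpa [hl] using congrFun hmul (Classical.arbitrary ι)
  rw [hl, ht, Prod.mk_zero_zero]

theorem IsStrictlyNegType.exists_continuous_mulVec_add_eq [Nonempty ι]
    (hD : IsStrictlyNegType D) :
    ∃ l : (ι → ℝ) → (ι → ℝ), Continuous l ∧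
      ∀ a, ∑ i, l a i = 1 ∧ ∃ t, ∀ i, (D *ᵥ l a) i + t = a i := by
  let e := LinearEquiv.ofInjectiveEndo (cayleyMengerMap D) hD.cayleyMengerMap_injective
  have he : Continuous e.symm := e.symm.toLinearMap.continuous_of_finiteDimensional
  refine ⟨fun a => (e.symm (a, 1)).1, by fun_prop, fun a => ?_⟩
  have h : cayleyMengerMap D (e.symm (a, 1)) = (a, 1) := e.apply_symm_apply (a, 1)
  exact ⟨congrArg Prod.snd h, _, congrFun (congrArg Prod.fst h)⟩

end NegativeType

section EuclideanDistances

open scoped Matrix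

variable {ι V P : Type*} [Fintype ι] [NormedAddCommGroup V] [InnerProductSpace ℝ V] [MetricSpace P]
  [NormedAddTorsor V P] {p : ι → P}

theorem dist_affineCombination_sq {l : ι → ℝ} (hl : ∑ i, l i = 1) (i : ι) :
    dist (Finset.univ.affineCombination ℝ p l) (p i) ^ 2 =
      (sqDistMatrix p *ᵥ l) i - l ⬝ᵥ sqDistMatrix p *ᵥ l / 2 := by
  classical
  let D := sqDistMatrix p
  have hdist : dist (Finset.univ.affineCombination ℝ p l) (p i) ^ 2 =
      -((l - Pi.single i 1) ⬝ᵥ D *ᵥ (l - Pi.single i 1)) / 2 := by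
    rw [← Finset.univ.affineCombination_piSingle ℝ p (Finset.mem_univ i), sq,
      EuclideanGeometry.dist_affineCombination p hl (Fintype.sum_pi_single' i 1)]
    simp only [dotProduct, Matrix.mulVec, Finset.mul_sum, D, sqDistMatrix, Matrix.of_apply, sq,
      mul_assoc, mul_comm, mul_left_comm]
  have hsymm : l ⬝ᵥ D *ᵥ Pi.single i 1 = (D *ᵥ l) i := by
    rw [Matrix.dotProduct_mulVec, dotProduct_single_one, ← Matrix.mulVec_transpose,
      sqDistMatrix_isSymm]
  rw [hdist, Matrix.mulVec_sub, dotProduct_sub, sub_dotProduct, sub_dotProduct, hsymm,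
    single_one_dotProduct, single_one_dotProduct, Matrix.mulVec_single_one, Matrix.col_apply,
    show D i i = 0 from sqDistMatrix_apply_self p i]
  ring

theorem exists_norm_eq_one_mem_vectorSpan_orthogonal [FiniteDimensional ℝ V] [Nonempty ι]
    (hcard : Fintype.card ι ≤ finrank ℝ V) (p : ι → P) :
    ∃ e ∈ (vectorSpan ℝ (Set.range p))ᗮ, ‖e‖ = 1 := by
  have hlt : finrank ℝ (vectorSpan ℝ (Set.range p)) < finrank ℝ V := by
    have hpos := Fintype.card_pos (α := ι)
    have := finrank_vectorSpan_range_le ℝ p (n := Fintype.card ι - 1) (by omega)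
    omega
  have hne : (vectorSpan ℝ (Set.range p))ᗮ ≠ ⊥ := fun h => by
    rw [Submodule.orthogonal_eq_bot_iff] at h
    rw [h, finrank_top] at hlt
    exact hlt.false
  obtain ⟨e, he, he0⟩ := Submodule.exists_mem_ne_zero_of_ne_bot hne
  exact ⟨(‖e‖⁻¹ : ℝ) • e, Submodule.smul_mem _ _ he, norm_smul_inv_norm he0⟩

theorem exists_continuous_dist_eq [FiniteDimensional ℝ V] [Nonempty ι]
    (hcard : Fintype.card ι ≤ finrank ℝ V) (hp : IsStrictlyNegType (sqDistMatrix p)) :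
    ∃ q : (ι → ℝ) → P, Continuous q ∧ ∀ r, (∀ i, 0 ≤ r i) →
      IsStrictlyNegType (adjoinPoint (sqDistMatrix p) fun i => r i ^ 2) →
      ∀ i, dist (q r) (p i) = r i := by
  obtain ⟨e, he, he1⟩ := exists_norm_eq_one_mem_vectorSpan_orthogonal hcard p
  obtain ⟨l, hl_cont, hl⟩ := hp.exists_continuous_mulVec_add_eq
  let D := sqDistMatrix p
  let foot (a : ι → ℝ) : P := Finset.univ.affineCombination ℝ p (l a)
  let heightSq (a : ι → ℝ) : ℝ := l a ⬝ᵥ a - l a ⬝ᵥ D *ᵥ l a / 2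
  have hfoot : Continuous foot :=
    (Finset.univ.affineCombination ℝ p).continuous_of_finiteDimensional.comp hl_cont
  have hheight : Continuous heightSq := by
    simp only [heightSq]
    fun_prop
  refine ⟨fun r => √(heightSq fun i => r i ^ 2) • e +ᵥ foot fun i => r i ^ 2, by fun_prop,
    fun r hr hr_neg i => ?_⟩
  set a : ι → ℝ := fun i => r i ^ 2
  obtain ⟨hsum, t, ht⟩ := hl a
  have hform : l a ⬝ᵥ a = l a ⬝ᵥ D *ᵥ l a + t := by
    calc l a ⬝ᵥ a = l a ⬝ᵥ (D *ᵥ l a + fun _ => t) := congrArg _ (funext ht).symm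
      _ = l a ⬝ᵥ D *ᵥ l a + t := by
        rw [dotProduct_add, dotProduct, dotProduct, ← Finset.sum_mul, hsum, one_mul]
  have hheight_nonneg : 0 ≤ heightSq a := by
    have := hr_neg.dotProduct_mulVec_lt hsum
    simp only [heightSq]
    linarith
  have hpyth := EuclideanGeometry.dist_sq_smul_orthogonal_vadd_smul_orthogonal_vadd
    (affineCombination_mem_affineSpan hsum p) (mem_affineSpan ℝ (Set.mem_range_self i))
    √(heightSq a) 0 (direction_affineSpan ℝ (Set.range p) ▸ he)
  rw [zero_smul, zero_vadd, sub_zero, he1, mul_one, mul_one, ← sq, ← sq, ← sq, Real.norm_eq_abs,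
    sq_abs, Real.sq_sqrt hheight_nonneg, dist_affineCombination_sq hsum] at hpyth
  rw [← sq_eq_sq₀ dist_nonneg (hr i), hpyth]
  calc (D *ᵥ l a) i - l a ⬝ᵥ D *ᵥ l a / 2 + (l a ⬝ᵥ a - l a ⬝ᵥ D *ᵥ l a / 2)
      = (D *ᵥ l a) i + t := by linarith
    _ = r i ^ 2 := ht i

end EuclideanDistances

section Extension

theorem exists_continuous_dist_eq_of_mem_Icc {ι V P : Type*} [Fintype ι] [Nonempty ι]
    [NormedAddCommGroup V] [InnerProductSpace ℝ V] [FiniteDimensional ℝ V] [MetricSpace P]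
    [NormedAddTorsor V P] {p : ι → P} {s t : ℝ} (hs : 0 ≤ s) (hst : s ≤ t)
    (hcard : Fintype.card ι ≤ finrank ℝ V)
    (hratio : (finrank ℝ V + 1) * (t ^ 2 - s ^ 2) < 2 * t ^ 2)
    (hp : Pairwise fun i j => dist (p i) (p j) ∈ Set.Icc s t) :
    ∃ q : (ι → ℝ) → P, Continuous q ∧
      ∀ r ∈ Set.Icc (fun _ => s) fun _ => t, ∀ i, dist (q r) (p i) = r i := by
  have hsq {x : ℝ} (hx : x ∈ Set.Icc s t) : x ^ 2 ∈ Set.Icc (s ^ 2) (t ^ 2) :=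
    ⟨pow_le_pow_left₀ hs hx.1 2, pow_le_pow_left₀ (hs.trans hx.1) hx.2 2⟩
  have hsq_le : s ^ 2 ≤ t ^ 2 := (hsq ⟨le_rfl, hst⟩).2
  have hD : Pairwise fun i j => sqDistMatrix p i j ∈ Set.Icc (s ^ 2) (t ^ 2) :=
    hp.mono fun i j => hsq
  have hneg {κ : Type _} [Fintype κ] {D : Matrix κ κ ℝ}
      (hκ : Fintype.card κ ≤ finrank ℝ V + 1) (h0 : ∀ i, D i i = 0)
      (h : Pairwise fun i j => D i j ∈ Set.Icc (s ^ 2) (t ^ 2)) : IsStrictlyNegType D := by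
    refine isStrictlyNegType_of_mem_Icc hsq_le (lt_of_le_of_lt ?_ hratio) h0 h
    exact mul_le_mul_of_nonneg_right (by exact_mod_cast hκ) (sub_nonneg.2 hsq_le)
  obtain ⟨q, hq_cont, hq⟩ := exists_continuous_dist_eq hcard
    (hneg (hcard.trans (Nat.le_succ _)) (sqDistMatrix_apply_self p) hD)
  refine ⟨q, hq_cont, fun r hr => hq r (fun i => hs.trans (hr.1 i)) ?_⟩
  exact hneg (by simpa using hcard) (adjoinPoint_apply_self (sqDistMatrix_apply_self p))
    (adjoinPoint_mem_of_ne hD fun i => hsq ⟨hr.1 i, hr.2 i⟩)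

variable {X E : Type*} [NormedAddCommGroup X] [NormedSpace ℝ X] [NormedAddCommGroup E]

theorem exists_forall_norm_sub_eq [InnerProductSpace ℝ E] [FiniteDimensional ℝ E] {ι : Type*}
    [Fintype ι] (T : X ≃ₗ[ℝ] E) {c s : ℝ} (hs : 0 < s)
    (hc : (finrank ℝ E - 1) * c ^ 2 < finrank ℝ E + 1)
    (hT : ∀ x, ‖x‖ ≤ ‖T x‖ ∧ ‖T x‖ ≤ c * ‖x‖) (hcard : Fintype.card ι ≤ finrank ℝ E)
    {p : ι → X} (hp : Pairwise fun i j => ‖p i - p j‖ = s) :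
    ∃ q, ∀ i, ‖q - p i‖ = s := by
  rcases isEmpty_or_nonempty ι with _ | _
  · exact ⟨0, isEmptyElim⟩
  have hc1 : 1 ≤ c := by
    have : Nontrivial E := nontrivial_of_finrank_pos (Fintype.card_pos.trans_le hcard)
    obtain ⟨x, hx⟩ := exists_ne (0 : E)
    have hpos : 0 < ‖T.symm x‖ := by simpa using hx
    exact (le_mul_iff_one_le_left hpos).1 ((hT _).1.trans (hT _).2)
  obtain ⟨q, hq_cont, hq⟩ := exists_continuous_dist_eq_of_mem_Icc (p := fun i => T (p i))
    hs.le (le_mul_of_one_le_left hs.le hc1) hcard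
    (by nlinarith [mul_lt_mul_of_pos_right hc (pow_pos hs 2)])
    fun i j hij => by simpa only [dist_eq_norm, ← map_sub, hp hij, Set.mem_Icc] using hT (p i - p j)
  let t (r : ι → ℝ) (i : ι) : ℝ := ‖T.symm (q r) - p i‖
  have ht_cont : Continuous t := by
    have : Continuous T.symm := T.symm.toLinearMap.continuous_of_finiteDimensional
    fun_prop
  have ht {r : ι → ℝ} (hr : r ∈ Set.Icc (fun _ => s) fun _ => c * s) (i : ι) :
      t r i ≤ r i ∧ r i ≤ c * t r i := by
    have := hT (T.symm (q r) - p i)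
    rwa [map_sub, T.apply_symm_apply, ← dist_eq_norm (q r), hq r hr i] at this
  -- By `ht` the correction of `r i` by `s - t r i` does not leave the interval `[s, c * s]`.
  obtain ⟨r, -, hr⟩ := exists_mem_Icc_pi_isFixedPt (g := fun r i => r i + (s - t r i))
    (fun _ => le_mul_of_one_le_left hs.le hc1) (Continuous.continuousOn (by fun_prop))
    fun r hr => ⟨fun i => by linarith [ht hr i, hr.1 i], fun i => by
      have : 0 ≤ (c - 1) * (c * s - r i) := mul_nonneg (sub_nonneg.2 hc1) (sub_nonneg.2 (hr.2 i))
      nlinarith [ht hr i]⟩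
  exact ⟨T.symm (q r), fun i => by linarith [show r i + (s - t r i) = r i from congrFun hr i]⟩

theorem exists_fin_pairwise_of_forall_exists {α : Type*} {r : α → α → Prop} [Std.Symm r]
    {n : ℕ} (hext : ∀ m ≤ n, ∀ p : Fin m → α, Pairwise (fun i j => r (p i) (p j)) →
      ∃ q, ∀ i, r q (p i)) :
    ∃ p : Fin (n + 1) → α, Pairwise fun i j => r (p i) (p j) := by
  suffices h : ∀ m ≤ n + 1, ∃ p : Fin m → α, Pairwise fun i j => r (p i) (p j) from h _ le_rfl
  intro m
  induction m with
  | zero => exact fun _ => ⟨Fin.elim0, fun i => i.elim0⟩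
  | succ m ih =>
    intro hm
    obtain ⟨p, hp⟩ := ih (Nat.le_of_succ_le hm)
    obtain ⟨q, hq⟩ := hext m (Nat.le_of_succ_le_succ hm) p hp
    refine ⟨Fin.cons q p, fun i j => ?_⟩
    refine Fin.cases ?_ (fun i => ?_) i <;> refine Fin.cases ?_ (fun j => ?_) j
    · exact fun h => absurd rfl h
    · exact fun _ => hq j
    · exact fun _ => symm (hq i)
    · exact fun h => hp (ne_of_apply_ne Fin.succ h)

theorem brass_dekster_extension_general [InnerProductSpace ℝ E] [FiniteDimensional ℝ E]
    (T : X ≃ₗ[ℝ] E) {c s : ℝ} (hs : 0 < s)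
    (hc : (finrank ℝ E - 1) * c ^ 2 < finrank ℝ E + 1)
    (hT : ∀ x, ‖x‖ ≤ ‖T x‖ ∧ ‖T x‖ ≤ c * ‖x‖) :
    (∀ m ≤ finrank ℝ E, ∀ p : Fin m → X, (Pairwise fun i j => ‖p i - p j‖ = s) →
      ∃ q, ∀ i, ‖q - p i‖ = s) ∧
    ∃ p : Fin (finrank ℝ E + 1) → X, Pairwise fun i j => ‖p i - p j‖ = s := by
  have hext (m : ℕ) (hm : m ≤ finrank ℝ E) (p : Fin m → X)
      (hp : Pairwise fun i j => ‖p i - p j‖ = s) : ∃ q, ∀ i, ‖q - p i‖ = s :=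
    exists_forall_norm_sub_eq T hs hc hT (by simpa using hm) hp
  have : Std.Symm fun x y : X => ‖x - y‖ = s := ⟨fun x y h => (norm_sub_rev y x).trans h⟩
  exact ⟨hext, exists_fin_pairwise_of_forall_exists (r := fun x y : X => ‖x - y‖ = s) hext⟩

end Extension

theorem sub_one_mul_one_add_one_div_sq_lt {x : ℝ} (hx : 0 ≤ x) :
    (x - 1) * (1 + 1 / (x + 1)) ^ 2 < x + 1 := by
  have hadd : 1 + 1 / (x + 1) = (x + 2) / (x + 1) := by field_simp; ring
  rw [hadd, div_pow, mul_div_assoc', div_lt_iff₀ (by positivity)]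
  nlinarith

theorem brass_dekster_extension
    (X : Type*) [NormedAddCommGroup X] [NormedSpace ℝ X]
    (n : ℕ) (hn : 1 ≤ n) (hdim : finrank ℝ X = n)
    (T : X ≃ₗ[ℝ] EuclideanSpace ℝ (Fin n))
    (hT : ∀ x : X, ‖x‖ ≤ ‖T x‖ ∧ ‖T x‖ ≤ (1 + 1 / (n + 1 : ℝ)) * ‖x‖) :
    (∀ (m : ℕ), m ≤ n → ∀ p : Fin m → X,
      (∀ i j, i ≠ j → ‖p i - p j‖ = 1) →
      ∃ q : X, ∀ i, ‖q - p i‖ = 1) ∧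
    (∃ p : Fin (n + 1) → X, ∀ i j, i ≠ j → ‖p i - p j‖ = 1) := by
  have hfin : finrank ℝ (EuclideanSpace ℝ (Fin n)) = n := finrank_euclideanSpace_fin
  have hc := sub_one_mul_one_add_one_div_sq_lt (n.cast_nonneg : (0 : ℝ) ≤ n)
  have hgen := brass_dekster_extension_general T one_pos (by rwa [hfin]) hT
  rw [hfin] at hgen
  exact ⟨fun m hm p hp => hgen.1 m hm p hp, hgen.2⟩
end

section
/- For each n ≥ 1, the maximum size of an equilateral set in ℓ_4^n is exactly n + 1: every equilateral subset of ℓ_4^n has at most n + 1 elements, and there exists an equilateral subset of ℓ_4^n with exactly n + 1 elements. -/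
/-!
Upper bound (Swanepoel). Expanding `(a - b) ^ (2 * m)` binomially shows that, for real weights `w`
whose moments `∑ w i * x i ^ j` vanish for all `j < m`,
`∑ i, ∑ j, w i * w j * (x i - x j) ^ (2 * m) = (-1) ^ m * (2 * m).choose m * (∑ w i * x i ^ m) ^ 2`,
which is nonnegative for even `m`. Summing over coordinates, the matrix `‖v i - v j‖ ^ (2 * m)` is
nonnegative on weights annihilating the functions `1` and `x_k ^ j` with `1 ≤ j < m`. For an
equilateral family this matrix is `λ ^ (2 * m)` off the diagonal and zero on it, hence negative
on nonzero weights of total mass zero. So no nonzero weight annihilates these functions, and the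
family is no larger than their number, which for `m = 2` is the dimension plus one.

Lower bound. The standard basis vectors are at mutual distance `2 ^ (1 / p)`, and by the
intermediate value theorem some point `-t • (1, …, 1)` is at that same distance from all of them.
-/

open Finset
open scoped ENNReal

/-- A set is equilateral if all pairs of distinct points of it are at one common positive distance.
In particular the empty set and singletons are equilateral. -/
def IsEquilateral {E : Type*} [SeminormedAddCommGroup E] (S : Set E) : Prop :=
  ∃ lam : ℝ, 0 < lam ∧ S.Pairwise fun x y => ‖x - y‖ = lam

section WeightedSums

variable {α : Type*} [Fintype α]

theorem exists_ne_zero_forall_sum_mul_eq_zero {K κ : Type*} [Field K] [Fintype κ]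
    (φ : κ → α → K) (h : Fintype.card κ < Fintype.card α) :
    ∃ w : α → K, w ≠ 0 ∧ ∀ k, ∑ i, w i * φ k i = 0 := by
  have hker : LinearMap.ker (Matrix.of φ).mulVecLin ≠ ⊥ :=
    LinearMap.ker_ne_bot_of_finrank_lt (by simpa using h)
  obtain ⟨w, hw, hw0⟩ := (Submodule.ne_bot_iff _).1 hker
  refine ⟨w, hw0, fun k => ?_⟩
  simpa [Matrix.mulVec, dotProduct, mul_comm] using congrFun hw k

theorem exists_weights_pow_moments_eq_zero {K ι : Type*} [Field K] [Fintype ι] (x : α → ι → K)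
    (m : ℕ) (h : (m - 1) * Fintype.card ι + 1 < Fintype.card α) :
    ∃ w : α → K, w ≠ 0 ∧ ∑ i, w i = 0 ∧ ∀ k, ∀ j < m, ∑ i, w i * x i k ^ j = 0 := by
  let φ : Option (ι × Fin (m - 1)) → α → K
    | none, _ => 1
    | some (k, j), i => x i k ^ (j + 1 : ℕ)
  obtain ⟨w, hw0, hw⟩ := exists_ne_zero_forall_sum_mul_eq_zero φ (by simpa [mul_comm] using h)
  have hsum : ∑ i, w i = 0 := by simpa [φ] using hw none
  refine ⟨w, hw0, hsum, fun k j hj => ?_⟩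
  cases j with
  | zero => simpa using hsum
  | succ j => exact hw (some (k, ⟨j, by lia⟩))

theorem sum_sum_mul_sub_pow_two_mul {R : Type*} [CommRing R] (w a : α → R) (m : ℕ)
    (hw : ∀ j < m, ∑ i, w i * a i ^ j = 0) :
    ∑ i, ∑ j, w i * w j * (a i - a j) ^ (2 * m) =
      (-1) ^ m * (2 * m).choose m * (∑ i, w i * a i ^ m) ^ 2 := by
  let M (r : ℕ) : R := ∑ i, w i * a i ^ r
  have expand : ∑ i, ∑ j, w i * w j * (a i - a j) ^ (2 * m) =
      ∑ r ∈ range (2 * m + 1), (-1) ^ (r + 2 * m) * (2 * m).choose r * (M r * M (2 * m - r)) := by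
    have separate (r : ℕ) :
        (-1) ^ (r + 2 * m) * (2 * m).choose r * (M r * M (2 * m - r)) =
          ∑ i, ∑ j, w i * w j *
            ((-1) ^ (r + 2 * m) * a i ^ r * a j ^ (2 * m - r) * (2 * m).choose r) := by
      rw [sum_mul_sum, mul_sum]
      refine sum_congr rfl fun i _ => ?_
      rw [mul_sum]
      exact sum_congr rfl fun j _ => by ring
    simp only [separate, sub_pow, mul_sum, sum_comm (s := range (2 * m + 1))]
  have vanish : ∀ r ∈ range (2 * m + 1), r ≠ m →
      (-1) ^ (r + 2 * m) * (2 * m).choose r * (M r * M (2 * m - r)) = 0 := by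
    intro r hr2m hrm
    have hr_le : r ≤ 2 * m := mem_range_succ_iff.1 hr2m
    rcases hrm.lt_or_gt with hr | hr
    · rw [show M r = 0 from hw r hr, zero_mul, mul_zero]
    · rw [show M (2 * m - r) = 0 from hw _ (by lia), mul_zero, mul_zero]
  rw [expand, sum_eq_single_of_mem m (by simp; lia) vanish, show 2 * m - m = m by lia, ← sq,
    pow_add, (even_two_mul m).neg_one_pow, mul_one]

theorem sum_sum_mul_norm_sub_pow_of_pairwise_eq {E : Type*} [SeminormedAddCommGroup E] {v : α → E}
    {lam : ℝ} (hv : Pairwise fun i j => ‖v i - v j‖ = lam) {w : α → ℝ} (hw : ∑ i, w i = 0)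
    {q : ℕ} (hq : q ≠ 0) :
    ∑ i, ∑ j, w i * w j * ‖v i - v j‖ ^ q = -lam ^ q * ∑ i, w i ^ 2 := by
  classical
  have norm_pow_eq (i j : α) : ‖v i - v j‖ ^ q = lam ^ q - if i = j then lam ^ q else 0 := by
    split_ifs with hij
    · simp [hij, hq]
    · rw [hv hij, sub_zero]
  rw [mul_sum]
  refine sum_congr rfl fun i _ => ?_
  calc ∑ j, w i * w j * ‖v i - v j‖ ^ q
      = ∑ j, (w i * lam ^ q * w j - if i = j then w i * w j * lam ^ q else 0) :=
        sum_congr rfl fun j _ => by rw [norm_pow_eq]; split_ifs <;> ring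
    _ = -lam ^ q * w i ^ 2 := by
        rw [sum_sub_distrib, ← mul_sum, hw, sum_ite_eq, if_pos (mem_univ i)]
        ring

end WeightedSums

section UpperBound

variable {α ι : Type*} [Fintype α] [Fintype ι] {p : ℝ≥0∞} [Fact (1 ≤ p)] {m : ℕ}

theorem piLp_norm_pow_eq_sum_of_even {q : ℕ} (hp : p = q) (hq : Even q)
    (x : PiLp p fun _ : ι => ℝ) : ‖x‖ ^ q = ∑ k, x k ^ q := by
  have hq0 : q ≠ 0 := by
    rintro rfl
    simpa [hp] using Fact.out (p := 1 ≤ p)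
  rw [PiLp.norm_eq_of_nat q hp, one_div, Real.rpow_inv_natCast_pow (by positivity) hq0]
  simp only [Real.norm_eq_abs, hq.pow_abs]

theorem sum_sum_mul_piLp_norm_sub_pow_nonneg (hm : Even m) (hp : p = (2 * m : ℕ))
    (v : α → PiLp p fun _ : ι => ℝ) (w : α → ℝ)
    (hw : ∀ k, ∀ j < m, ∑ i, w i * v i k ^ j = 0) :
    0 ≤ ∑ i, ∑ j, w i * w j * ‖v i - v j‖ ^ (2 * m) := by
  calc 0 ≤ ∑ k, (-1) ^ m * (2 * m).choose m * (∑ i, w i * v i k ^ m) ^ 2 := by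
        rw [hm.neg_one_pow]
        positivity
    _ = ∑ k, ∑ i, ∑ j, w i * w j * (v i k - v j k) ^ (2 * m) :=
        sum_congr rfl fun k _ => (sum_sum_mul_sub_pow_two_mul w (v · k) m (hw k)).symm
    _ = ∑ i, ∑ j, w i * w j * ‖v i - v j‖ ^ (2 * m) := by
        simp only [piLp_norm_pow_eq_sum_of_even hp (even_two_mul m), PiLp.sub_apply, mul_sum,
          sum_comm (s := (univ : Finset ι))]

theorem card_le_of_pairwise_piLp_norm_sub_eq (hm : Even m) (hp : p = (2 * m : ℕ))
    {v : α → PiLp p fun _ : ι => ℝ} {lam : ℝ} (hlam : 0 < lam)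
    (hv : Pairwise fun i j => ‖v i - v j‖ = lam) :
    Fintype.card α ≤ (m - 1) * Fintype.card ι + 1 := by
  by_contra! hcard
  obtain ⟨w, hw0, hsum, hmoments⟩ := exists_weights_pow_moments_eq_zero (fun i => v i) m hcard
  have hm0 : 2 * m ≠ 0 := fun h => by simpa [hp, h] using Fact.out (p := 1 ≤ p)
  have hnonneg := sum_sum_mul_piLp_norm_sub_pow_nonneg hm hp v w hmoments
  rw [sum_sum_mul_norm_sub_pow_of_pairwise_eq hv hsum hm0] at hnonneg
  obtain ⟨i, hi⟩ := Function.ne_iff.1 hw0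
  have hsq : 0 < ∑ i, w i ^ 2 :=
    sum_pos' (fun _ _ => sq_nonneg _) ⟨i, mem_univ i, sq_pos_of_ne_zero hi⟩
  have : 0 < lam ^ (2 * m) * ∑ i, w i ^ 2 := by positivity
  linarith

theorem IsEquilateral.card_le {S : Finset (PiLp p fun _ : ι => ℝ)}
    (hS : IsEquilateral (S : Set (PiLp p fun _ : ι => ℝ))) (hm : Even m) (hp : p = (2 * m : ℕ)) :
    S.card ≤ (m - 1) * Fintype.card ι + 1 := by
  obtain ⟨lam, hlam, hpair⟩ := hS
  simpa using card_le_of_pairwise_piLp_norm_sub_eq hm hp hlam hpair.subtype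

end UpperBound

section LowerBound

theorem exists_mul_rpow_add_one_add_rpow_eq_two {a r : ℝ} (ha : 0 ≤ a) (hr : 1 ≤ r) :
    ∃ t, 0 ≤ t ∧ a * t ^ r + (1 + t) ^ r = 2 := by
  have hr0 : 0 < r := by linarith
  have hcont : ContinuousOn (fun t : ℝ => a * t ^ r + (1 + t) ^ r) (Set.Icc 0 1) := by
    fun_prop (disch := simp [hr0.le])
  have htwo : (2 : ℝ) ≤ 2 ^ r := Real.self_le_rpow_of_one_le one_le_two hr
  have hmem : (2 : ℝ) ∈ Set.Icc (a * 0 ^ r + (1 + 0) ^ r) (a * 1 ^ r + (1 + 1) ^ r) := by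
    norm_num [Real.zero_rpow hr0.ne']
    linarith
  obtain ⟨t, ht, heq⟩ := intermediate_value_Icc zero_le_one hcont hmem
  exact ⟨t, ht.1, heq⟩

variable {ι : Type*} [Fintype ι] [DecidableEq ι] (p : ℝ≥0∞)

theorem sum_norm_rpow_single_sub_single {i j : ι} (hij : i ≠ j) {r : ℝ} (hr : r ≠ 0) :
    ∑ k, ‖(PiLp.single p i 1 - PiLp.single p j 1 : PiLp p fun _ : ι => ℝ) k‖ ^ r = 2 := by
  rw [Fintype.sum_eq_add i j hij fun k hk => by simp [hk.1, hk.2, hr]]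
  norm_num [hij, hij.symm]

theorem sum_norm_rpow_single_sub_const (i : ι) {t : ℝ} (ht : 0 ≤ t) (r : ℝ) :
    ∑ k, ‖(PiLp.single p i 1 - WithLp.toLp p fun _ => -t : PiLp p fun _ : ι => ℝ) k‖ ^ r =
      ((Fintype.card ι : ℝ) - 1) * t ^ r + (1 + t) ^ r := by
  have hcard : 1 ≤ Fintype.card ι := Fintype.card_pos_iff.2 ⟨i⟩
  have hoff : ∀ k ∈ ({i} : Finset ι)ᶜ,
      ‖(PiLp.single p i 1 - WithLp.toLp p fun _ => -t : PiLp p fun _ : ι => ℝ) k‖ ^ r = t ^ r := by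
    intro k hk
    have hki : k ≠ i := by simpa using hk
    simp [hki, abs_of_nonneg ht]
  rw [Fintype.sum_eq_add_sum_compl i, sum_congr rfl hoff, sum_const, card_compl, card_singleton,
    nsmul_eq_mul, Nat.cast_sub hcard, add_comm]
  simp [abs_of_nonneg (show 0 ≤ 1 + t by positivity)]

/-- The vertices of a simplex in `ℓ_p`: the standard basis together with the apex
`-t • (1, …, 1)`, indexed by `none`. -/
def basisWithApex (t : ℝ) : Option ι → PiLp p fun _ : ι => ℝ
  | none => WithLp.toLp p fun _ => -t
  | some i => PiLp.single p i 1

theorem exists_pairwise_norm_basisWithApex_sub_eq [Nonempty ι] [Fact (1 ≤ p)] (hp : p ≠ ∞) :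
    ∃ t : ℝ, Pairwise fun a b : Option ι =>
      ‖basisWithApex p t a - basisWithApex p t b‖ = 2 ^ (1 / p.toReal) := by
  have hr : 1 ≤ p.toReal := (ENNReal.dichotomy p).resolve_left hp
  have hr0 : 0 < p.toReal := by linarith
  have hcard : (0 : ℝ) ≤ Fintype.card ι - 1 :=
    sub_nonneg.2 (Nat.one_le_cast.2 Fintype.card_pos)
  obtain ⟨t, ht, heq⟩ := exists_mul_rpow_add_one_add_rpow_eq_two hcard hr
  have hapex (i : ι) :
      ‖basisWithApex p t (some i) - basisWithApex p t none‖ = 2 ^ (1 / p.toReal) := by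
    rw [PiLp.norm_eq_sum hr0, basisWithApex, basisWithApex, sum_norm_rpow_single_sub_const p i ht,
      heq]
  refine ⟨t, ?_⟩
  rintro (_ | i) (_ | j) hab
  · exact absurd rfl hab
  · rw [norm_sub_rev, hapex]
  · exact hapex i
  · have hij : i ≠ j := fun h => hab (congrArg some h)
    rw [PiLp.norm_eq_sum hr0, basisWithApex, basisWithApex,
      sum_norm_rpow_single_sub_single p hij hr0.ne']

end LowerBound

theorem exists_isEquilateral_card_eq_of_pairwise {α E : Type*} [Fintype α]
    [SeminormedAddCommGroup E] {v : α → E} {lam : ℝ} (hlam : 0 < lam)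
    (hv : Pairwise fun i j => ‖v i - v j‖ = lam) :
    ∃ S : Finset E, S.card = Fintype.card α ∧ IsEquilateral (S : Set E) := by
  have hinj : Function.Injective v := fun i j hij => by
    by_contra hne
    have h0 : ‖v i - v j‖ = 0 := by rw [hij, sub_self, norm_zero]
    exact hlam.ne (h0.symm.trans (hv hne))
  refine ⟨univ.map ⟨v, hinj⟩, card_map _, lam, hlam, ?_⟩
  simpa using Pairwise.range_pairwise hv

theorem exists_isEquilateral_card_eq_card_add_one (ι : Type*) [Fintype ι] (p : ℝ≥0∞)
    [Fact (1 ≤ p)] (hp : p ≠ ∞) :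
    ∃ S : Finset (PiLp p fun _ : ι => ℝ), S.card = Fintype.card ι + 1 ∧
      IsEquilateral (S : Set (PiLp p fun _ : ι => ℝ)) := by
  classical
  cases isEmpty_or_nonempty ι
  · exact ⟨{0}, by simp, 1, one_pos, by simp⟩
  · obtain ⟨t, ht⟩ := exists_pairwise_norm_basisWithApex_sub_eq (ι := ι) p hp
    simpa using exists_isEquilateral_card_eq_of_pairwise (by positivity) ht

theorem equilateral_l4_general (ι : Type*) [Fintype ι] {p : ℝ≥0∞} [Fact (1 ≤ p)] {m : ℕ}
    (hm : Even m) (hp : p = (2 * m : ℕ)) :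
    (∀ S : Finset (PiLp p fun _ : ι => ℝ), IsEquilateral (S : Set (PiLp p fun _ : ι => ℝ)) →
      S.card ≤ (m - 1) * Fintype.card ι + 1) ∧
    ∃ S : Finset (PiLp p fun _ : ι => ℝ), S.card = Fintype.card ι + 1 ∧
      IsEquilateral (S : Set (PiLp p fun _ : ι => ℝ)) :=
  ⟨fun _ hS => hS.card_le hm hp,
    exists_isEquilateral_card_eq_card_add_one ι p (hp ▸ ENNReal.natCast_ne_top _)⟩

theorem equilateral_l4
    (n : ℕ) (hn : 1 ≤ n) :
    (∀ S : Finset (PiLp 4 (fun _ : Fin n => ℝ)),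
      (∃ lam : ℝ, 0 < lam ∧ ∀ x ∈ S, ∀ y ∈ S, x ≠ y → ‖x - y‖ = lam) →
      S.card ≤ n + 1) ∧
    (∃ S : Finset (PiLp 4 (fun _ : Fin n => ℝ)),
      S.card = n + 1 ∧
      ∃ lam : ℝ, 0 < lam ∧ ∀ x ∈ S, ∀ y ∈ S, x ≠ y → ‖x - y‖ = lam) := by
  have : Fact ((1 : ℝ≥0∞) ≤ 4) := ⟨by norm_num⟩
  simpa [IsEquilateral, Set.Pairwise] using
    equilateral_l4_general (Fin n) (p := 4) even_two (by norm_num)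
end

section
/- Let p be a positive even integer and n ≥ 1. Then every equilateral subset of ℓ_p^n has cardinality at most (p/2 − 1)·n + 1 if p ≡ 0 (mod 4), and at most (p/2)·n + 1 if p ≡ 2 (mod 4). -/
open scoped ENNReal

/-!
Attach to each point `x` the vector of the monomials `1, xᵢ, xᵢ², …, xᵢᴹ` over all coordinates `i`.
If `M` is odd and `p ≤ 2 (M + 1)`, these vectors are linearly independent on an equilateral set: a
relation `c` among them makes all moments `∑ c x * xᵢ ^ k` with `k ≤ M` vanish, and expanding
`(xᵢ - yᵢ) ^ p` by the binomial theorem leaves in `∑ c x * c y * ‖x - y‖ ^ p` at most the squares of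
the moments of order `M + 1`, with a positive sign since `M + 1` is even. Being equilateral, the set
turns the same sum into `-λ ^ p * ∑ c x ^ 2`, so `c = 0`. Hence there are at most as many points as
monomials, and `M` may be taken to be whichever of `p / 2 - 1` and `p / 2` is odd.
-/

section QuadraticForm

variable {R α : Type*} [CommRing R]

lemma sum_sum_mul_sub_pow (s : Finset α) (c t : α → R) (p : ℕ) :
    ∑ x ∈ s, ∑ y ∈ s, c x * c y * (t x - t y) ^ p =
      ∑ k ∈ Finset.range (p + 1), (-1) ^ (k + p) * p.choose k *
        ((∑ x ∈ s, c x * t x ^ k) * ∑ y ∈ s, c y * t y ^ (p - k)) := by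
  simp_rw [sub_pow, Finset.sum_mul_sum, Finset.mul_sum]
  rw [Finset.sum_comm_cycle]
  refine Finset.sum_congr rfl fun k _ ↦ Finset.sum_congr rfl fun x _ ↦
    Finset.sum_congr rfl fun y _ ↦ ?_
  ring

lemma sum_sum_mul_sub_pow_nonneg [LinearOrder R] [IsStrictOrderedRing R] {s : Finset α}
    {c t : α → R} {m p : ℕ} (hm : Even m) (hp : p ≤ 2 * m)
    (hc : ∀ k < m, ∑ x ∈ s, c x * t x ^ k = 0) :
    0 ≤ ∑ x ∈ s, ∑ y ∈ s, c x * c y * (t x - t y) ^ p := by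
  rw [sum_sum_mul_sub_pow]
  refine Finset.sum_nonneg fun k hkp ↦ ?_
  rw [Finset.mem_range_succ_iff] at hkp
  obtain hk | hk | ⟨rfl, rfl⟩ : k < m ∨ p - k < m ∨ k = m ∧ p = 2 * m := by omega
  · simp [hc k hk]
  · simp [hc (p - k) hk]
  · have hsign : Even (k + 2 * k) := hm.add (even_two_mul k)
    rw [hsign.neg_one_pow, show 2 * k - k = k by omega]
    exact mul_nonneg (by positivity) (mul_self_nonneg _)

lemma sum_sum_mul_of_pairwise_eq {s : Finset α} {c : α → R} {d : α → α → R} {a : R}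
    (hc : ∑ x ∈ s, c x = 0) (hdiag : ∀ x ∈ s, d x x = 0)
    (hoff : (s : Set α).Pairwise fun x y ↦ d x y = a) :
    ∑ x ∈ s, ∑ y ∈ s, c x * c y * d x y = -(a * ∑ x ∈ s, c x * c x) := by
  classical
  rw [Finset.mul_sum, ← Finset.sum_neg_distrib]
  refine Finset.sum_congr rfl fun x hx ↦ ?_
  have hrest : ∑ y ∈ s.erase x, c y = -c x := by
    rw [Finset.sum_erase_eq_sub hx, hc, zero_sub]
  calc ∑ y ∈ s, c x * c y * d x y
      = ∑ y ∈ s.erase x, c x * c y * d x y :=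
        (Finset.sum_erase _ (by simp [hdiag x hx])).symm
    _ = ∑ y ∈ s.erase x, c x * a * c y := Finset.sum_congr rfl fun y hy ↦ by
        obtain ⟨hne, hy⟩ := Finset.mem_erase.mp hy
        rw [hoff hx hy hne.symm]
        ring
    _ = -(a * (c x * c x)) := by
        rw [← Finset.mul_sum, hrest]
        ring

end QuadraticForm

section PurePowers

/-- The vector of the pure monomials `1, v i, …, v i ^ M` in the coordinates of `v`, whose linear
independence bounds the size of an equilateral set. The constant monomial, common to all
coordinates, is listed once, at `none`. -/
def purePowers {R ι : Type*} [Monoid R] (M : ℕ) (v : ι → R) : Option (Fin M × ι) → R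
  | none => 1
  | some (k, i) => v i ^ (k.val + 1)

lemma sum_mul_pow_eq_zero_of_sum_smul_purePowers_eq_zero {R α ι : Type*} [Semiring R] {M : ℕ}
    {s : Finset α} {c : α → R} {v : α → ι → R} (h : ∑ x ∈ s, c x • purePowers M (v x) = 0) {k : ℕ}
    (hk : k ≤ M) (i : ι) :
    ∑ x ∈ s, c x * v x i ^ k = 0 := by
  cases k with
  | zero => simpa [purePowers] using congrFun h none
  | succ k => simpa [purePowers] using congrFun h (some (⟨k, hk⟩, i))

variable {R α ι : Type*} [CommRing R] [LinearOrder R] [IsStrictOrderedRing R] [Fintype ι]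
  {M p : ℕ} {v : α → ι → R} {a : R} {S : Set α}

lemma linearIndepOn_purePowers (hp : p ≠ 0) (hM : Odd M) (hpM : p ≤ 2 * (M + 1)) (ha : 0 < a)
    (hS : S.Pairwise fun x y ↦ ∑ i, (v x i - v y i) ^ p = a) :
    LinearIndepOn R (fun x ↦ purePowers M (v x)) S := by
  refine linearIndepOn_iff'.mpr fun s c hsS hc ↦ ?_
  have hmoment : ∀ i, ∀ k < M + 1, ∑ x ∈ s, c x * v x i ^ k = 0 := fun i k hk ↦
    sum_mul_pow_eq_zero_of_sum_smul_purePowers_eq_zero hc (Nat.le_of_lt_succ hk) i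
  have hsum : ∑ x ∈ s, c x = 0 := by
    simpa [purePowers] using congrFun hc none
  have hform : -(a * ∑ x ∈ s, c x * c x) =
      ∑ i, ∑ x ∈ s, ∑ y ∈ s, c x * c y * (v x i - v y i) ^ p := by
    rw [← sum_sum_mul_of_pairwise_eq hsum (by simp [hp]) (hS.mono hsS)]
    simp_rw [Finset.mul_sum]
    exact Finset.sum_comm_cycle
  have hnonneg : 0 ≤ -(a * ∑ x ∈ s, c x * c x) := hform ▸
    Finset.sum_nonneg fun i _ ↦ sum_sum_mul_sub_pow_nonneg hM.add_one hpM (hmoment i)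
  have hsq : ∑ x ∈ s, c x * c x = 0 :=
    (nonpos_of_mul_nonpos_right (neg_nonneg.mp hnonneg) ha).antisymm
      (Finset.sum_nonneg fun x _ ↦ mul_self_nonneg (c x))
  exact (Finset.sum_mul_self_eq_zero_iff s c).mp hsq

theorem encard_le_of_pairwise_sum_sub_pow_eq (hp : p ≠ 0) (hM : Odd M) (hpM : p ≤ 2 * (M + 1))
    (ha : 0 < a) (hS : S.Pairwise fun x y ↦ ∑ i, (v x i - v y i) ^ p = a) :
    S.encard ≤ (M * Fintype.card ι + 1 : ℕ) := by
  simpa using (linearIndepOn_purePowers hp hM hpM ha hS).encard_le_toENat_rank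

end PurePowers

lemma norm_pow_eq_sum_pow_of_even {ι : Type*} [Fintype ι] {p : ℕ} (hp : p ≠ 0) (hpeven : Even p)
    (x : PiLp (p : ℝ≥0∞) fun _ : ι ↦ ℝ) : ‖x‖ ^ p = ∑ i, x i ^ p := by
  have hnonneg : 0 ≤ ∑ i, x i ^ p := Finset.sum_nonneg fun i _ ↦ hpeven.pow_nonneg (x i)
  rw [PiLp.norm_eq_sum (by simpa using hp.pos)]
  simp [hpeven.pow_abs, Real.rpow_inv_natCast_pow hnonneg hp]

theorem equilateral_lp_even_general {ι : Type*} [Fintype ι] {p M : ℕ} (hp : p ≠ 0)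
    (hpeven : Even p) (hM : Odd M) (hpM : p ≤ 2 * (M + 1))
    {S : Set (PiLp (p : ℝ≥0∞) fun _ : ι ↦ ℝ)} {lam : ℝ} (hlam : 0 < lam)
    (hS : S.Pairwise fun x y ↦ ‖x - y‖ = lam) :
    S.encard ≤ (M * Fintype.card ι + 1 : ℕ) := by
  refine encard_le_of_pairwise_sum_sub_pow_eq (v := fun x i ↦ x i) hp hM hpM (pow_pos hlam p)
    fun x hx y hy hxy ↦ ?_
  simpa [hS hx hy hxy] using (norm_pow_eq_sum_pow_of_even hp hpeven (x - y)).symm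

theorem equilateral_lp_even
    (p : ℕ) (hp : 0 < p) (hpeven : Even p) (n : ℕ) (hn : 1 ≤ n)
    (S : Finset (PiLp (p : ℝ≥0∞) (fun _ : Fin n => ℝ)))
    (hS : ∃ lam : ℝ, 0 < lam ∧ ∀ x ∈ S, ∀ y ∈ S, x ≠ y → ‖x - y‖ = lam) :
    (p % 4 = 0 → S.card ≤ (p / 2 - 1) * n + 1) ∧
    (p % 4 = 2 → S.card ≤ (p / 2) * n + 1) := by
  obtain ⟨lam, hlam, hS⟩ := hS
  have hpair : (S : Set (PiLp (p : ℝ≥0∞) fun _ : Fin n ↦ ℝ)).Pairwise fun x y ↦ ‖x - y‖ = lam :=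
    fun x hx y hy ↦ hS x hx y hy
  have hbound {M : ℕ} (hM : Odd M) (hpM : p ≤ 2 * (M + 1)) : S.card ≤ M * n + 1 := by
    have hencard := equilateral_lp_even_general hp.ne' hpeven hM hpM hlam hpair
    rwa [Set.encard_coe_eq_coe_finsetCard, Nat.cast_le, Fintype.card_fin] at hencard
  exact ⟨fun h ↦ hbound (Nat.odd_iff.mpr (by omega)) (by omega),
    fun h ↦ hbound (Nat.odd_iff.mpr (by omega)) (by omega)⟩
end

section
/- Let A be a real symmetric n × n matrix that is not the zero matrix. Then (Σ_{i=1}^n A_{ii})² ≤ (rank A) · Σ_{i,j=1}^n A_{ij}²; equivalently, rank A ≥ (trace A)² / Σ_{i,j} A_{ij}². -/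
/-!
Let `P` be the orthogonal projection onto the range of `A`, so that `P * A = A`. Cauchy–Schwarz for
the Frobenius inner product bounds `‖tr A‖ = ‖tr (P * A)‖` by the product of the Frobenius norms of
`P` and `A`, and the squared Frobenius norm of `P` is `tr (P * Pᴴ) = tr P = rank P = rank A`.
-/

section

open Matrix

variable {m n : Type*} [Fintype m] [Fintype n]

theorem norm_trace_mul_sq_le {R : Type*} [NonUnitalSeminormedRing R]
    (A : Matrix m n R) (B : Matrix n m R) :
    ‖(A * B).trace‖ ^ 2 ≤ (∑ i, ∑ j, ‖A i j‖ ^ 2) * ∑ i, ∑ j, ‖B i j‖ ^ 2 := by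
  have entrywise : ‖(A * B).trace‖ ≤ ∑ p : m × n, ‖A p.1 p.2‖ * ‖B p.2 p.1‖ := by
    simp only [trace, diag_apply, mul_apply, ← Fintype.sum_prod_type']
    exact norm_sum_le_of_le _ fun p _ ↦ norm_mul_le _ _
  calc ‖(A * B).trace‖ ^ 2
      ≤ (∑ p : m × n, ‖A p.1 p.2‖ * ‖B p.2 p.1‖) ^ 2 := by gcongr
    _ ≤ (∑ p : m × n, ‖A p.1 p.2‖ ^ 2) * ∑ p : m × n, ‖B p.2 p.1‖ ^ 2 :=
      Finset.sum_mul_sq_le_sq_mul_sq _ _ _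
    _ = (∑ i, ∑ j, ‖A i j‖ ^ 2) * ∑ i, ∑ j, ‖B i j‖ ^ 2 := by
      rw [Fintype.sum_prod_type, Fintype.sum_prod_type_right]

theorem trace_eq_rank_of_isIdempotentElem {K : Type*} [Field K] {P : Matrix n n K}
    (hP : IsIdempotentElem P) : P.trace = P.rank := by
  classical
  have isProj : LinearMap.IsProj (toLin' P).range (toLin' P) :=
    LinearMap.IsIdempotentElem.isProj_range _ (hP.map toLinAlgEquiv')
  rw [← trace_toLin'_eq, isProj.trace, rank, toLin'_apply']

variable {𝕜 : Type*} [RCLike 𝕜]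

theorem trace_mul_conjTranspose_self (A : Matrix m n 𝕜) :
    (A * Aᴴ).trace = ((∑ i, ∑ j, ‖A i j‖ ^ 2 : ℝ) : 𝕜) := by
  simp [trace, mul_apply, RCLike.mul_conj]

theorem sum_norm_sq_eq_rank_of_isStarProjection {P : Matrix n n 𝕜} (hP : IsStarProjection P) :
    ∑ i, ∑ j, ‖P i j‖ ^ 2 = (P.rank : ℝ) := by
  have trace_eq : (P * Pᴴ).trace = P.rank := by
    rw [← star_eq_conjTranspose, hP.isSelfAdjoint.star_eq, hP.isIdempotentElem.eq,
      trace_eq_rank_of_isIdempotentElem hP.isIdempotentElem]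
  exact_mod_cast (trace_mul_conjTranspose_self P).symm.trans trace_eq

theorem rank_eq_finrank_range_toEuclideanLin {l : Type*} [Finite l] [DecidableEq n]
    (A : Matrix l n 𝕜) : A.rank = Module.finrank 𝕜 (toEuclideanLin A).range :=
  A.rank_eq_finrank_range_toLin (PiLp.basisFun 2 𝕜 l) (PiLp.basisFun 2 𝕜 n)

theorem exists_isStarProjection_mul_eq_self (A : Matrix m n 𝕜) :
    ∃ P : Matrix m m 𝕜, IsStarProjection P ∧ P * A = A ∧ P.rank = A.rank := by
  classical
  let Φ := toEuclideanCLM (n := m) (𝕜 := 𝕜)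
  let π := (toEuclideanLin A).range.starProjection
  have toEuclideanLin_symm_π : toEuclideanLin (Φ.symm π) = π.toLinearMap := by
    rw [← coe_toEuclideanCLM_eq_toEuclideanLin, Φ.apply_symm_apply]
  refine ⟨Φ.symm π, isStarProjection_starProjection.map Φ.symm, toEuclideanLin.injective ?_, ?_⟩
  · ext1 x
    rw [toEuclideanLin, toLpLin_mul_same, ← toEuclideanLin, toEuclideanLin_symm_π]
    exact Submodule.starProjection_eq_self_iff.mpr ⟨x, rfl⟩
  · rw [rank_eq_finrank_range_toEuclideanLin, toEuclideanLin_symm_π,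
      Submodule.range_starProjection, rank_eq_finrank_range_toEuclideanLin]

theorem rank_lemma_general (A : Matrix n n 𝕜) :
    ‖A.trace‖ ^ 2 ≤ A.rank * ∑ i, ∑ j, ‖A i j‖ ^ 2 := by
  obtain ⟨P, hP, mul_eq, rank_eq⟩ := exists_isStarProjection_mul_eq_self A
  calc ‖A.trace‖ ^ 2
      = ‖(P * A).trace‖ ^ 2 := by rw [mul_eq]
    _ ≤ (∑ i, ∑ j, ‖P i j‖ ^ 2) * ∑ i, ∑ j, ‖A i j‖ ^ 2 := norm_trace_mul_sq_le P A
    _ = A.rank * ∑ i, ∑ j, ‖A i j‖ ^ 2 := by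
      rw [sum_norm_sq_eq_rank_of_isStarProjection hP, rank_eq]

end

theorem rank_lemma
    (n : ℕ) (A : Matrix (Fin n) (Fin n) ℝ)
    (hsymm : A.transpose = A) (hne : A ≠ 0) :
    (∑ i, A i i) ^ 2 ≤ (A.rank : ℝ) * ∑ i, ∑ j, A i j ^ 2 := by
  simpa [Matrix.trace] using rank_lemma_general A
end

section
/- There exists an absolute constant c > 0 such that for every real p with 1 ≤ p < ∞ and every n ≥ 1, every equilateral subset of ℓ_p^n has cardinality at most c · p · n^((2p+2)/(2p−1)). -/
/-!
Scale the common distance to `1`, so that `∑ k, |x k - y k| ^ p = 1` for distinct points `x`, `y`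
of a set of `m` points in dimension `n`. Replacing `|t| ^ p` by a polynomial `P` that is within
`δ = 1 / (2 n √m)` of it on `[-1, 1]` makes the matrix `1 - ∑ k, P (x k - y k)` agree with the
identity up to `1 / (2 √m)` in every entry. Comparing trace and Frobenius norm, such a matrix has
rank at least `m / 10`; on the other hand its entries are polynomial in the coordinates of `x`, so
its rank is at most `n * deg P + 1`.

A `P` of degree `O(p δ ^ (-1 / p))` exists: it is a truncated Chebyshev expansion, equivalently a
partial Fourier sum of `|cos θ| ^ p`. Integration by parts gives a two-term recurrence for the
Fourier coefficients, which shows that they decay like `k ^ (-(p + 1))`. Altogether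
`m ≲ p n (n √m) ^ (1 / p)`, and solving for `m` gives the bound.
-/

section MatrixRank

open Polynomial

lemma sq_norm_trace_le_rank_mul_sum_sq_norm {𝕜 ι : Type*} [RCLike 𝕜] [Fintype ι]
    (A : Matrix ι ι 𝕜) : ‖A.trace‖ ^ 2 ≤ A.rank * ∑ j, ∑ i, ‖A i j‖ ^ 2 := by
  classical
  let V : Submodule 𝕜 (EuclideanSpace 𝕜 ι) := LinearMap.range A.toEuclideanLin
  let column (j : ι) : EuclideanSpace 𝕜 ι := WithLp.toLp 2 fun i ↦ A i j
  have column_mem (j : ι) : column j ∈ V := ⟨EuclideanSpace.single j 1, by ext i; simp [column]⟩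
  have finrank_V : Module.finrank 𝕜 V = A.rank := by
    rw [A.rank_eq_finrank_range_toLin (EuclideanSpace.basisFun ι 𝕜).toBasis
      (EuclideanSpace.basisFun ι 𝕜).toBasis, ← Matrix.toEuclideanLin_eq_toLin_orthonormal]
  let b := stdOrthonormalBasis 𝕜 V
  have diag_eq (j : ι) :
      A j j = ∑ l, inner 𝕜 (b l : EuclideanSpace 𝕜 ι) (column j) * (b l).1 j := by
    simpa [column] using
      congrArg (fun v : V ↦ (v : EuclideanSpace 𝕜 ι) j) (b.sum_repr' ⟨column j, column_mem j⟩).symm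
  have column_norm (j : ι) :
      ∑ l, ‖inner 𝕜 (b l : EuclideanSpace 𝕜 ι) (column j)‖ ^ 2 = ∑ i, ‖A i j‖ ^ 2 := by
    simpa [column, EuclideanSpace.norm_sq_eq] using
      b.sum_sq_norm_inner_right ⟨column j, column_mem j⟩
  have basis_norm : ∑ j, ∑ l, ‖(b l).1 j‖ ^ 2 = A.rank := by
    rw [Finset.sum_comm, ← finrank_V]
    simp [← EuclideanSpace.norm_sq_eq, ← Submodule.coe_norm, b.norm_eq_one]
  calc ‖A.trace‖ ^ 2
      ≤ (∑ j, ∑ l, ‖inner 𝕜 (b l : EuclideanSpace 𝕜 ι) (column j)‖ * ‖(b l).1 j‖) ^ 2 := by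
        gcongr
        refine norm_sum_le_of_le _ fun j _ ↦ ?_
        rw [Matrix.diag_apply, diag_eq]
        exact norm_sum_le_of_le _ fun l _ ↦ (norm_mul _ _).le
    _ ≤ (∑ j, ∑ l, ‖inner 𝕜 (b l : EuclideanSpace 𝕜 ι) (column j)‖ ^ 2) *
          ∑ j, ∑ l, ‖(b l).1 j‖ ^ 2 := by
        simp_rw [← Finset.sum_product']
        exact Finset.sum_mul_sq_le_sq_mul_sq _ _ _
    _ = A.rank * ∑ j, ∑ i, ‖A i j‖ ^ 2 := by simp_rw [column_norm, basis_norm, mul_comm]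

lemma card_mul_one_sub_sq_le_rank_mul {𝕜 ι : Type*} [RCLike 𝕜] [Fintype ι] [DecidableEq ι]
    {A : Matrix ι ι 𝕜} {ε : ℝ} (hε : ε ≤ 1) (hA : ∀ i j, ‖A i j - (1 : Matrix ι ι 𝕜) i j‖ ≤ ε) :
    Fintype.card ι * (1 - ε) ^ 2 ≤ A.rank * ((1 + ε) ^ 2 + Fintype.card ι * ε ^ 2) := by
  rcases isEmpty_or_nonempty ι with _ | _
  · simp only [Fintype.card_eq_zero, Nat.cast_zero, zero_mul]
    positivity
  set m : ℝ := (Fintype.card ι : ℝ) with hm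
  have m_pos : 0 < m := Nat.cast_pos.mpr Fintype.card_pos
  have le_norm_trace : m * (1 - ε) ≤ ‖A.trace‖ := by
    have norm_trace_sub_one_le : ‖(A - 1).trace‖ ≤ m * ε := by
      simpa [Matrix.trace, hm] using norm_sum_le_of_le Finset.univ fun i _ ↦ hA i i
    have norm_trace_one : ‖(1 : Matrix ι ι 𝕜).trace‖ = m := by simp [hm]
    have := norm_sub_norm_le (1 : Matrix ι ι 𝕜).trace ((1 : Matrix ι ι 𝕜).trace - A.trace)
    rw [norm_trace_one, sub_sub_cancel, norm_sub_rev, ← Matrix.trace_sub] at this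
    linarith
  have entry_sq_le (i j : ι) : ‖A i j‖ ^ 2 ≤ (if i = j then (1 + ε) ^ 2 else 0) + ε ^ 2 := by
    have norm_le : ‖A i j‖ ≤ ‖(1 : Matrix ι ι 𝕜) i j‖ + ε :=
      norm_le_norm_add_const_of_dist_le (by rw [dist_eq_norm]; exact hA i j)
    rcases eq_or_ne i j with rfl | hij
    · rw [Matrix.one_apply_eq, norm_one] at norm_le
      rw [if_pos rfl]
      nlinarith [pow_le_pow_left₀ (norm_nonneg _) norm_le 2]
    · rw [Matrix.one_apply_ne hij, norm_zero, zero_add] at norm_le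
      rw [if_neg hij, zero_add]
      exact pow_le_pow_left₀ (norm_nonneg _) norm_le 2
  have sum_sq_le : ∑ j, ∑ i, ‖A i j‖ ^ 2 ≤ m * ((1 + ε) ^ 2 + m * ε ^ 2) :=
    calc ∑ j, ∑ i, ‖A i j‖ ^ 2
        ≤ ∑ j, ∑ i, ((if i = j then (1 + ε) ^ 2 else 0) + ε ^ 2) :=
          Finset.sum_le_sum fun j _ ↦ Finset.sum_le_sum fun i _ ↦ entry_sq_le i j
      _ = m * ((1 + ε) ^ 2 + m * ε ^ 2) := by simp [Finset.sum_add_distrib, hm]; ring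
  refine le_of_mul_le_mul_left ?_ m_pos
  calc m * (m * (1 - ε) ^ 2) = (m * (1 - ε)) ^ 2 := by ring
    _ ≤ ‖A.trace‖ ^ 2 :=
        pow_le_pow_left₀ (mul_nonneg m_pos.le (sub_nonneg.mpr hε)) le_norm_trace 2
    _ ≤ A.rank * ∑ j, ∑ i, ‖A i j‖ ^ 2 := sq_norm_trace_le_rank_mul_sum_sq_norm A
    _ ≤ A.rank * (m * ((1 + ε) ^ 2 + m * ε ^ 2)) := by gcongr
    _ = m * (A.rank * ((1 + ε) ^ 2 + m * ε ^ 2)) := by ring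

lemma card_le_ten_mul_rank {𝕜 ι : Type*} [RCLike 𝕜] [Fintype ι] [DecidableEq ι]
    {A : Matrix ι ι 𝕜}
    (hA : ∀ i j, ‖A i j - (1 : Matrix ι ι 𝕜) i j‖ ≤ 1 / (2 * √(Fintype.card ι))) :
    Fintype.card ι ≤ 10 * A.rank := by
  rcases isEmpty_or_nonempty ι with _ | _
  · simp
  set m : ℝ := (Fintype.card ι : ℝ) with hm
  have one_le_m : 1 ≤ m := Nat.one_le_cast.mpr Fintype.card_pos
  set ε : ℝ := 1 / (2 * √m) with hε
  have ε_pos : 0 < ε := by positivity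
  have ε_le : ε ≤ 1 / 2 :=
    one_div_le_one_div_of_le two_pos (by linarith [Real.one_le_sqrt.mpr one_le_m])
  have m_mul_ε_sq : m * ε ^ 2 = 1 / 4 := by
    rw [hε, div_pow, mul_pow, Real.sq_sqrt (by positivity)]
    field_simp
    norm_num
  have : m * (1 / 4) ≤ A.rank * (5 / 2) :=
    calc m * (1 / 4) ≤ m * (1 - ε) ^ 2 := by gcongr; nlinarith
      _ ≤ A.rank * ((1 + ε) ^ 2 + m * ε ^ 2) :=
          card_mul_one_sub_sq_le_rank_mul (by linarith) hA
      _ ≤ A.rank * (5 / 2) := by gcongr; nlinarith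
  rw [← Nat.cast_le (α := ℝ), ← hm]
  push_cast
  linarith

lemma rank_of_add_sum_eval_le {R ι κ σ : Type*} [CommRing R] [Nontrivial R]
    [Fintype κ] [Fintype σ] {D : ℕ} (c : κ → R) (Q : κ → σ → R[X])
    (hQ : ∀ j k, (Q j k).natDegree ≤ D) (x : ι → σ → R) :
    (Matrix.of fun i j ↦ c j + ∑ k, (Q j k).eval (x i k)).rank ≤ Fintype.card σ * D + 1 := by
  let B : Matrix ι (Option (σ × Fin D)) R :=
    Matrix.of fun i s ↦ s.elim 1 fun (k, l) ↦ x i k ^ (l + 1 : ℕ)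
  let C : Matrix (Option (σ × Fin D)) κ R :=
    Matrix.of fun s j ↦ s.elim (c j + ∑ k, (Q j k).coeff 0) fun (k, l) ↦ (Q j k).coeff (l + 1)
  have factorization : (Matrix.of fun i j ↦ c j + ∑ k, (Q j k).eval (x i k)) = B * C := by
    ext i j
    have eval_eq (k : σ) : (Q j k).eval (x i k) =
        (Q j k).coeff 0 + ∑ l : Fin D, x i k ^ (l + 1 : ℕ) * (Q j k).coeff (l + 1) := by
      rw [eval_eq_sum_range' (Nat.lt_succ_of_le (hQ j k)), Finset.sum_range_succ', Finset.sum_range]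
      simp [add_comm, mul_comm]
    simp [B, C, Matrix.mul_apply, eval_eq, Fintype.sum_option, Fintype.sum_prod_type,
      Finset.sum_add_distrib, add_assoc]
  calc _ = (B * C).rank := by rw [factorization]
    _ ≤ B.rank := Matrix.rank_mul_le_left B C
    _ ≤ Fintype.card (Option (σ × Fin D)) := B.rank_le_card_width
    _ = Fintype.card σ * D + 1 := by simp

lemma card_le_of_abs_sub_eval_le {ι σ : Type*} [Fintype ι] [Fintype σ]
    {f : ℝ → ℝ} (hf : f 0 = 0) {x : ι → σ → ℝ}
    (hx : Pairwise fun i j ↦ ∑ k, f (x i k - x j k) = 1) {P : ℝ[X]} {δ : ℝ}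
    (hP : ∀ i j k, |f (x i k - x j k) - P.eval (x i k - x j k)| ≤ δ)
    (hδ : Fintype.card σ * δ ≤ 1 / (2 * √(Fintype.card ι))) :
    Fintype.card ι ≤ 10 * (Fintype.card σ * P.natDegree + 1) := by
  classical
  let Q (j : ι) (k : σ) : ℝ[X] := -(P.comp (X - C (x j k)))
  have natDegree_Q (j : ι) (k : σ) : (Q j k).natDegree ≤ P.natDegree := by
    simp [Q, natDegree_comp]
  let A : Matrix ι ι ℝ := Matrix.of fun i j ↦ 1 + ∑ k, (Q j k).eval (x i k)
  have entry (i j : ι) : A i j - (1 : Matrix ι ι ℝ) i j =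
      ∑ k, (f (x i k - x j k) - P.eval (x i k - x j k)) := by
    have sum_f : ∑ k, f (x i k - x j k) = 1 - (1 : Matrix ι ι ℝ) i j := by
      rcases eq_or_ne i j with rfl | hij
      · simp [hf]
      · rw [hx hij, Matrix.one_apply_ne hij, sub_zero]
    simp only [A, Q, Matrix.of_apply, eval_neg, eval_comp, eval_sub, eval_X, eval_C,
      Finset.sum_neg_distrib, Finset.sum_sub_distrib, sum_f]
    ring
  have near_one (i j : ι) : ‖A i j - (1 : Matrix ι ι ℝ) i j‖ ≤ 1 / (2 * √(Fintype.card ι)) :=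
    calc ‖A i j - (1 : Matrix ι ι ℝ) i j‖ ≤ ∑ _k : σ, δ := by
          rw [entry]
          exact norm_sum_le_of_le _ fun k _ ↦ hP i j k
      _ = Fintype.card σ * δ := by simp
      _ ≤ 1 / (2 * √(Fintype.card ι)) := hδ
  calc Fintype.card ι ≤ 10 * A.rank := card_le_ten_mul_rank near_one
    _ ≤ 10 * (Fintype.card σ * P.natDegree + 1) := by
        gcongr
        exact rank_of_add_sum_eval_le _ Q natDegree_Q x

end MatrixRank

section CosRpowRatio

/-- The ratio `c k / c 0` of the Fourier coefficients of the `π`-periodic function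
`θ ↦ |cos θ| ^ p`. The factors come from the recurrence
`(p + 2 * j + 2) * c (j + 1) = (p - 2 * j) * c j`, see `cosRpowIntegral_two_mul_natCast`. -/
noncomputable def cosRpowRatio (p : ℝ) (k : ℕ) : ℝ :=
  ∏ j ∈ Finset.range k, (p - 2 * j) / (p + 2 * j + 2)

variable {p : ℝ}

lemma cosRpowRatio_zero (p : ℝ) : cosRpowRatio p 0 = 1 :=
  Finset.prod_range_zero _

lemma cosRpowRatio_succ (p : ℝ) (k : ℕ) :
    cosRpowRatio p (k + 1) = cosRpowRatio p k * ((p - 2 * k) / (p + 2 * k + 2)) :=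
  Finset.prod_range_succ _ _

lemma abs_cosRpowRatio_le_one (hp : -1 ≤ p) (k : ℕ) : |cosRpowRatio p k| ≤ 1 := by
  rw [cosRpowRatio, Finset.abs_prod]
  refine Finset.prod_le_one (fun j _ ↦ abs_nonneg _) fun j _ ↦ ?_
  have denom_pos : 0 < p + 2 * j + 2 := by linarith [(j.cast_nonneg : (0 : ℝ) ≤ j)]
  rw [abs_div, abs_of_pos denom_pos, div_le_one denom_pos, abs_le]
  constructor <;> linarith [(j.cast_nonneg : (0 : ℝ) ≤ j)]

lemma abs_cosRpowRatio_succ_of_half_le (hp : -1 ≤ p) {k : ℕ} (hk : p / 2 ≤ k) :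
    |cosRpowRatio p (k + 1)| = |cosRpowRatio p k| * ((2 * k - p) / (p + 2 * k + 2)) := by
  have denom_pos : 0 < p + 2 * k + 2 := by linarith [(k.cast_nonneg : (0 : ℝ) ≤ k)]
  rw [cosRpowRatio_succ, abs_mul, abs_div, abs_sub_comm,
    abs_of_nonneg (show 0 ≤ 2 * (k : ℝ) - p by linarith), abs_of_pos denom_pos]

lemma abs_cosRpowRatio_le (hp : 0 < p) (k : ℕ) :
    |cosRpowRatio p k| ≤ ((p + 1) / (k + p / 2)) ^ (p + 1) := by
  have le_of_le {l : ℕ} (hl : (l : ℝ) ≤ p / 2 + 1) :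
      |cosRpowRatio p l| ≤ ((p + 1) / (l + p / 2)) ^ (p + 1) := by
    refine (abs_cosRpowRatio_le_one (by linarith) l).trans (Real.one_le_rpow ?_ (by linarith))
    rw [one_le_div (by positivity)]
    linarith
  induction k with
  | zero => exact le_of_le (by push_cast; linarith)
  | succ k ih =>
    rcases lt_or_ge (k : ℝ) (p / 2) with hk | hk
    · exact le_of_le (by push_cast; linarith)
    set s : ℝ := 1 / (k + p / 2 + 1) with hs
    have s_le_one : s ≤ 1 := by
      rw [hs, div_le_one (by positivity)]
      linarith [(k.cast_nonneg : (0 : ℝ) ≤ k)]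
    have factor_eq : (2 * k - p) / (p + 2 * k + 2) = 1 + (p + 1) * -s := by
      rw [hs]
      field_simp
      ring
    have bernoulli : 1 + (p + 1) * -s ≤ (1 + -s) ^ (p + 1) :=
      one_add_mul_self_le_rpow_one_add (neg_le_neg s_le_one) (by linarith)
    calc |cosRpowRatio p (k + 1)| = |cosRpowRatio p k| * (1 + (p + 1) * -s) := by
          rw [abs_cosRpowRatio_succ_of_half_le (by linarith) hk, factor_eq]
      _ ≤ |cosRpowRatio p k| * (1 + -s) ^ (p + 1) := by gcongr
      _ ≤ ((p + 1) / (k + p / 2)) ^ (p + 1) * (1 + -s) ^ (p + 1) := by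
          gcongr
          exact Real.rpow_nonneg (by linarith) _
      _ = ((p + 1) / (k + p / 2) * (1 + -s)) ^ (p + 1) :=
          (Real.mul_rpow (by positivity) (by linarith)).symm
      _ = ((p + 1) / ((k + 1 : ℕ) + p / 2)) ^ (p + 1) := by
          congr 1
          rw [hs]
          push_cast
          field_simp
          ring

lemma sum_range_abs_cosRpowRatio_le (hp : 0 < p) {N : ℕ} (hN : p / 2 ≤ N) (K : ℕ) :
    ∑ k ∈ Finset.range K, |cosRpowRatio p (k + (N + 1))| ≤
      |cosRpowRatio p N| * (2 * N - p) / (2 * p) := by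
  let u (k : ℕ) : ℝ := |cosRpowRatio p (k + N)| * (2 * (k + N : ℕ) - p) / (2 * p)
  have half_le (k : ℕ) : p / 2 ≤ (k + N : ℕ) :=
    hN.trans (Nat.cast_le.mpr (Nat.le_add_left N k))
  have telescoping (k : ℕ) : |cosRpowRatio p (k + (N + 1))| = u k - u (k + 1) := by
    have := abs_cosRpowRatio_succ_of_half_le (by linarith) (half_le k)
    simp only [u, ← add_assoc, add_right_comm k 1 N]
    rw [this]
    push_cast
    field_simp
    ring
  have u_nonneg : 0 ≤ u K := by
    have := half_le K
    exact div_nonneg (mul_nonneg (abs_nonneg _) (by linarith)) (by linarith)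
  calc ∑ k ∈ Finset.range K, |cosRpowRatio p (k + (N + 1))| = u 0 - u K := by
        simp_rw [telescoping]
        exact Finset.sum_range_sub' u K
    _ ≤ u 0 := sub_le_self _ u_nonneg
    _ = |cosRpowRatio p N| * (2 * N - p) / (2 * p) := by simp [u]

lemma summable_abs_cosRpowRatio (hp : 0 < p) : Summable fun k ↦ |cosRpowRatio p k| := by
  obtain ⟨N, hN⟩ := exists_nat_ge (p / 2)
  rw [← summable_nat_add_iff (N + 1)]
  exact summable_of_sum_range_le (fun _ ↦ abs_nonneg _) (sum_range_abs_cosRpowRatio_le hp hN)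

lemma tsum_abs_cosRpowRatio_le (hp : 0 < p) {N : ℕ} (hN : p / 2 ≤ N) :
    ∑' k, |cosRpowRatio p (k + (N + 1))| ≤ (p + 1) / p * ((p + 1) / N) ^ p := by
  have N_pos : (0 : ℝ) < N := by linarith
  calc ∑' k, |cosRpowRatio p (k + (N + 1))|
      ≤ |cosRpowRatio p N| * (2 * N - p) / (2 * p) :=
        Real.tsum_le_of_sum_range_le (fun _ ↦ abs_nonneg _) (sum_range_abs_cosRpowRatio_le hp hN)
    _ ≤ ((p + 1) / (N + p / 2)) ^ (p + 1) * (2 * N) / (2 * p) := by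
        gcongr
        · linarith
        · exact abs_cosRpowRatio_le hp N
        · linarith
    _ ≤ ((p + 1) / N) ^ (p + 1) * (2 * N) / (2 * p) := by gcongr; linarith
    _ = (p + 1) / p * ((p + 1) / N) ^ p := by
        rw [Real.rpow_add_one (by positivity)]
        field_simp

end CosRpowRatio

section FourierSeries

open Complex
open scoped Real

/-- The Fourier transform at `w` of the restriction of `cos ^ p` to `[-π / 2, π / 2]`, where `cos`
is nonnegative; at the even integers it is `π` times the Fourier coefficients of the `π`-periodic
function `θ ↦ |cos θ| ^ p`. -/
noncomputable def cosRpowIntegral (p : ℝ) (w : ℂ) : ℂ :=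
  ∫ θ in (-(π / 2))..(π / 2), exp (-(w * I * θ)) * (Real.cos θ ^ p : ℝ)

/-- The mean value of `θ ↦ |cos θ| ^ p`, that is, its zeroth Fourier coefficient. -/
noncomputable def cosRpowMean (p : ℝ) : ℝ :=
  π⁻¹ * ∫ θ in (-(π / 2))..(π / 2), Real.cos θ ^ p

variable {p : ℝ}

lemma cosRpowIntegral_zero (p : ℝ) : cosRpowIntegral p 0 = π * cosRpowMean p := by
  simp only [cosRpowIntegral, cosRpowMean, zero_mul, neg_zero, exp_zero, one_mul,
    intervalIntegral.integral_ofReal, ofReal_mul, ofReal_inv]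
  rw [mul_inv_cancel_left₀ (ofReal_ne_zero.mpr Real.pi_ne_zero)]

lemma cosRpowIntegral_neg (p : ℝ) (w : ℂ) : cosRpowIntegral p (-w) = cosRpowIntegral p w := by
  have h := intervalIntegral.integral_comp_neg (a := -(π / 2)) (b := π / 2)
    fun θ : ℝ ↦ exp (-(w * I * θ)) * (Real.cos θ ^ p : ℝ)
  rw [neg_neg] at h
  rw [cosRpowIntegral, cosRpowIntegral, ← h]
  simp

lemma hasDerivAt_cos_rpow_mul_exp (hp : 0 ≤ p) (w : ℂ) (θ : ℝ) :
    HasDerivAt (fun θ : ℝ ↦ (Real.cos θ ^ (p + 1) : ℝ) * exp (-((w + 1) * I * θ)))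
      (I / 2 * ((p - w) * (exp (-(w * I * θ)) * (Real.cos θ ^ p : ℝ)) -
        (p + w + 2) * (exp (-((w + 2) * I * θ)) * (Real.cos θ ^ p : ℝ)))) θ := by
  have deriv_cos_rpow :=
    ((Real.hasDerivAt_cos θ).rpow_const (p := p + 1) (Or.inr (by linarith))).ofReal_comp
  have deriv_exp : HasDerivAt (fun θ : ℝ ↦ exp (-((w + 1) * I * θ)))
      (exp (-((w + 1) * I * θ)) * -((w + 1) * I)) θ := by
    simpa using ((hasDerivAt_id θ).ofReal_comp.const_mul ((w + 1) * I)).neg.cexp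
  refine (deriv_cos_rpow.mul deriv_exp).congr_deriv ?_
  have cos_rpow_succ : Real.cos θ ^ (p + 1) = Real.cos θ ^ p * Real.cos θ := by
    rcases eq_or_ne (Real.cos θ) 0 with h | h
    · rw [h, mul_zero, Real.zero_rpow (by linarith)]
    · exact Real.rpow_add_one h p
  have exp_w : exp (-(w * I * θ)) = exp (-((w + 1) * I * θ)) * exp (θ * I) := by
    rw [← exp_add]
    ring_nf
  have exp_w_add_two : exp (-((w + 2) * I * θ)) = exp (-((w + 1) * I * θ)) * exp (-θ * I) := by
    rw [← exp_add]
    ring_nf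
  rw [cos_rpow_succ, exp_w, exp_w_add_two, add_sub_cancel_right]
  push_cast
  rw [Complex.cos, Complex.sin]
  ring

lemma sub_mul_cosRpowIntegral (hp : 0 ≤ p) (w : ℂ) :
    (p - w) * cosRpowIntegral p w = (p + w + 2) * cosRpowIntegral p (w + 2) := by
  have integrable (a v : ℂ) : IntervalIntegrable
      (fun θ : ℝ ↦ a * (exp (-(v * I * θ)) * (Real.cos θ ^ p : ℝ))) MeasureTheory.volume
      (-(π / 2)) (π / 2) := by
    have : Continuous fun θ : ℝ ↦ Real.cos θ ^ p :=
      Real.continuous_cos.rpow_const fun _ ↦ Or.inr hp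
    exact Continuous.intervalIntegrable (by fun_prop) _ _
  have h := intervalIntegral.integral_eq_sub_of_hasDerivAt
    (fun θ _ ↦ hasDerivAt_cos_rpow_mul_exp hp w θ)
    (((integrable (p - w) w).sub (integrable (p + w + 2) (w + 2))).const_mul (I / 2))
  simp_rw [intervalIntegral.integral_const_mul] at h
  rw [intervalIntegral.integral_sub (integrable _ _) (integrable _ _), Real.cos_neg,
    Real.cos_pi_div_two, Real.zero_rpow (by linarith), ofReal_zero, zero_mul, zero_mul, sub_zero,
    intervalIntegral.integral_const_mul, intervalIntegral.integral_const_mul] at h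
  exact sub_eq_zero.mp ((mul_eq_zero_iff_left (by simp)).mp h)

lemma cosRpowIntegral_two_mul_natCast (hp : 0 ≤ p) (k : ℕ) :
    cosRpowIntegral p (2 * k) = π * cosRpowMean p * cosRpowRatio p k := by
  induction k with
  | zero => simp [cosRpowIntegral_zero, cosRpowRatio_zero]
  | succ k ih =>
    have h := sub_mul_cosRpowIntegral hp (2 * k)
    have denom_ne_zero : (p + 2 * k + 2 : ℂ) ≠ 0 := by
      exact_mod_cast (show 0 < p + 2 * k + 2 by positivity).ne'
    rw [cosRpowRatio_succ]
    push_cast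
    rw [mul_add_one, ← mul_right_inj' denom_ne_zero, ← h, ih]
    field_simp

lemma cosRpowIntegral_two_mul_intCast (hp : 0 ≤ p) (n : ℤ) :
    cosRpowIntegral p (2 * n) = π * cosRpowMean p * cosRpowRatio p n.natAbs := by
  rcases n.natAbs_eq with h | h <;> nth_rw 1 [h]
  · exact_mod_cast cosRpowIntegral_two_mul_natCast hp n.natAbs
  · rw [← cosRpowIntegral_two_mul_natCast hp, ← cosRpowIntegral_neg]
    simp

lemma abs_cosRpowMean_le_one (hp : 0 ≤ p) : |cosRpowMean p| ≤ 1 := by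
  have norm_integral_le : ‖∫ θ in (-(π / 2))..(π / 2), Real.cos θ ^ p‖ ≤
      1 * |π / 2 - -(π / 2)| := by
    refine intervalIntegral.norm_integral_le_of_norm_le_const fun θ hθ ↦ ?_
    rw [Set.uIoc_of_le (by linarith [Real.pi_pos])] at hθ
    have cos_nonneg := Real.cos_nonneg_of_mem_Icc (Set.Ioc_subset_Icc_self hθ)
    rw [Real.norm_of_nonneg (Real.rpow_nonneg cos_nonneg _)]
    exact Real.rpow_le_one cos_nonneg (Real.cos_le_one _) hp
  rw [one_mul, sub_neg_eq_add, add_halves, abs_of_pos Real.pi_pos, Real.norm_eq_abs]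
    at norm_integral_le
  rwa [cosRpowMean, abs_mul, abs_of_pos (inv_pos.mpr Real.pi_pos), inv_mul_le_iff₀ Real.pi_pos,
    mul_one]

lemma fact_pi_pos : Fact (0 < π) := ⟨Real.pi_pos⟩

attribute [local instance] fact_pi_pos

/-- The `π`-periodic function `θ ↦ |cos θ| ^ p` on the circle `ℝ / πℤ`, complex-valued so that
its Fourier series can be taken. -/
noncomputable def absCosRpow (hp : 0 ≤ p) : C(AddCircle π, ℂ) where
  toFun := Function.Periodic.lift (f := fun θ : ℝ ↦ ((|Real.cos θ| ^ p : ℝ) : ℂ)) (c := π)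
    fun θ ↦ by simp [Real.cos_add_pi]
  continuous_toFun := continuous_coinduced_dom.mpr <| continuous_ofReal.comp <|
    Real.continuous_cos.abs.rpow_const fun _ ↦ Or.inr hp

lemma absCosRpow_coe (hp : 0 ≤ p) (θ : ℝ) :
    absCosRpow hp (θ : AddCircle π) = (|Real.cos θ| ^ p : ℝ) :=
  rfl

lemma fourierCoeff_absCosRpow (hp : 0 ≤ p) (n : ℤ) :
    fourierCoeff (absCosRpow hp) n = (cosRpowMean p * cosRpowRatio p n.natAbs : ℝ) := by
  have integral_eq : ∫ θ in (-(π / 2))..(π / 2), fourier (-n) (θ : AddCircle π) •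
      absCosRpow hp (θ : AddCircle π) = cosRpowIntegral p (2 * n) := by
    refine intervalIntegral.integral_congr fun θ hθ ↦ ?_
    rw [Set.uIcc_of_le (by linarith [Real.pi_pos])] at hθ
    simp only [smul_eq_mul]
    rw [fourier_coe_apply, absCosRpow_coe, abs_of_nonneg (Real.cos_nonneg_of_mem_Icc hθ)]
    congr 2
    push_cast
    field_simp
  rw [fourierCoeff_eq_intervalIntegral _ n (-(π / 2)), neg_add_eq_sub, sub_half, integral_eq,
    cosRpowIntegral_two_mul_intCast hp, real_smul]
  push_cast
  field_simp

lemma summable_fourierCoeff_absCosRpow (hp : 0 < p) :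
    Summable (fourierCoeff (absCosRpow hp.le)) := by
  have summable_nat : Summable fun k : ℕ ↦ ((cosRpowMean p * cosRpowRatio p k : ℝ) : ℂ) :=
    ofRealCLM.summable ((summable_abs_cosRpowRatio hp).of_abs.mul_left _)
  apply Summable.of_nat_of_neg <;> simpa [fourierCoeff_absCosRpow] using summable_nat

-- Pairing the frequencies `k` and `-k` counts the constant term twice, hence the extra summand.
lemma hasSum_cosRpowRatio_mul_cos (hp : 0 < p) (θ : ℝ) :
    HasSum (fun k : ℕ ↦ 2 * cosRpowMean p * cosRpowRatio p k * Real.cos (2 * k * θ))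
      (|Real.cos θ| ^ p + cosRpowMean p) := by
  have fourier_coe (n : ℤ) :
      fourier n (θ : AddCircle π) = exp (((2 * n * θ : ℝ) : ℂ) * I) := by
    rw [fourier_coe_apply]
    congr 1
    push_cast
    field_simp
  convert! Complex.hasSum_re (has_pointwise_sum_fourier_series_of_summable
    (summable_fourierCoeff_absCosRpow hp) (θ : AddCircle π)).nat_add_neg using 1
  · funext k
    simp only [fourierCoeff_absCosRpow, fourier_coe, Int.natAbs_neg, Int.natAbs_natCast,
      smul_eq_mul, add_re, re_ofReal_mul, exp_ofReal_mul_I_re]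
    push_cast
    rw [mul_neg, neg_mul, Real.cos_neg]
    ring
  · simp [absCosRpow_coe, fourierCoeff_absCosRpow, cosRpowRatio_zero]

end FourierSeries

section PolynomialApproximation

open Polynomial

/-- The Chebyshev expansion of `t ↦ |t| ^ p` on `[-1, 1]` truncated at degree `2 * N`, obtained
from the Fourier series of `|cos θ| ^ p` through `T_{2k}(cos θ) = cos (2kθ)`. -/
noncomputable def absRpowChebyshev (p : ℝ) (N : ℕ) : ℝ[X] :=
  ∑ k ∈ Finset.range (N + 1),
    C (2 * cosRpowMean p * cosRpowRatio p k) * Chebyshev.T ℝ (2 * k : ℕ) - C (cosRpowMean p)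

lemma natDegree_absRpowChebyshev_le (p : ℝ) (N : ℕ) :
    (absRpowChebyshev p N).natDegree ≤ 2 * N := by
  rw [absRpowChebyshev, natDegree_sub_C]
  refine natDegree_sum_le_of_forall_le _ _ fun k hk ↦ (natDegree_C_mul_le _ _).trans ?_
  rw [Chebyshev.natDegree_T, Int.natAbs_natCast]
  rw [Finset.mem_range] at hk
  lia

lemma eval_cos_absRpowChebyshev (p : ℝ) (N : ℕ) (θ : ℝ) :
    (absRpowChebyshev p N).eval (Real.cos θ) =
      ∑ k ∈ Finset.range (N + 1), 2 * cosRpowMean p * cosRpowRatio p k * Real.cos (2 * k * θ) -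
        cosRpowMean p := by
  simp [absRpowChebyshev, eval_finsetSum, Chebyshev.T_real_cos]

lemma abs_rpow_sub_eval_absRpowChebyshev_le {p : ℝ} (hp : 0 < p) {N : ℕ} (hN : p / 2 ≤ N)
    {t : ℝ} (ht : |t| ≤ 1) :
    |(|t| ^ p - (absRpowChebyshev p N).eval t)| ≤ 2 * ((p + 1) / p * ((p + 1) / N) ^ p) := by
  obtain ⟨θ, rfl⟩ : ∃ θ, Real.cos θ = t :=
    ⟨Real.arccos t, Real.cos_arccos (abs_le.mp ht).1 (abs_le.mp ht).2⟩
  let term (k : ℕ) : ℝ := 2 * cosRpowMean p * cosRpowRatio p k * Real.cos (2 * k * θ)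
  have hasSum_term : HasSum term (|Real.cos θ| ^ p + cosRpowMean p) :=
    hasSum_cosRpowRatio_mul_cos hp θ
  have remainder_eq : |Real.cos θ| ^ p - (absRpowChebyshev p N).eval (Real.cos θ) =
      ∑' k, term (k + (N + 1)) := by
    have := hasSum_term.summable.sum_add_tsum_nat_add (N + 1)
    rw [hasSum_term.tsum_eq] at this
    rw [eval_cos_absRpowChebyshev]
    linarith
  have norm_term_le (k : ℕ) : ‖term k‖ ≤ 2 * |cosRpowRatio p k| :=
    calc ‖term k‖ = 2 * |cosRpowMean p| * |cosRpowRatio p k| * |Real.cos (2 * k * θ)| := by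
          simp [term]
      _ ≤ 2 * 1 * |cosRpowRatio p k| * 1 := by
          gcongr
          · exact abs_cosRpowMean_le_one hp.le
          · exact Real.abs_cos_le_one _
      _ = 2 * |cosRpowRatio p k| := by ring
  have summable_tail : Summable fun k ↦ |cosRpowRatio p (k + (N + 1))| :=
    (summable_nat_add_iff (f := fun k ↦ |cosRpowRatio p k|) _).mpr (summable_abs_cosRpowRatio hp)
  calc |(|Real.cos θ| ^ p - (absRpowChebyshev p N).eval (Real.cos θ))|
      ≤ 2 * ∑' k, |cosRpowRatio p (k + (N + 1))| := by
        rw [remainder_eq]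
        exact tsum_of_norm_bounded (summable_tail.hasSum.mul_left 2) fun k ↦ norm_term_le _
    _ ≤ 2 * ((p + 1) / p * ((p + 1) / N) ^ p) := by
        gcongr
        exact tsum_abs_cosRpowRatio_le hp hN

lemma exists_polynomial_abs_abs_rpow_sub_eval_le {p : ℝ} (hp : 1 ≤ p) {δ : ℝ} (hδ₀ : 0 < δ)
    (hδ₁ : δ ≤ 1) :
    ∃ P : ℝ[X], P.natDegree ≤ 18 * p * (1 / δ) ^ (1 / p) ∧
      ∀ t : ℝ, |t| ≤ 1 → |(|t| ^ p - P.eval t)| ≤ δ := by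
  set R : ℝ := (1 / δ) ^ (1 / p) with hR
  have one_le_R : 1 ≤ R := Real.one_le_rpow ((one_le_div hδ₀).mpr hδ₁) (by positivity)
  have one_le_mul : 1 ≤ p * R := one_le_mul_of_one_le_of_one_le hp one_le_R
  have R_rpow : (1 / R) ^ p = δ := by
    rw [one_div, Real.inv_rpow (by positivity), hR, ← Real.rpow_mul (by positivity),
      one_div_mul_cancel (by positivity), Real.rpow_one, one_div, inv_inv]
  let N := ⌈8 * p * R⌉₊
  have le_N : 8 * p * R ≤ N := Nat.le_ceil _
  have N_lt : (N : ℝ) < 8 * p * R + 1 := Nat.ceil_lt_add_one (by positivity)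
  have N_pos : (0 : ℝ) < N := by linarith
  refine ⟨absRpowChebyshev p N, ?_, fun t ht ↦ ?_⟩
  · calc ((absRpowChebyshev p N).natDegree : ℝ) ≤ 2 * N := by
          exact_mod_cast natDegree_absRpowChebyshev_le p N
      _ ≤ 18 * p * R := by linarith
  · have four_le : (4 : ℝ) ≤ 4 ^ p := Real.self_le_rpow_of_one_le (by norm_num) hp
    have ratio_le : (p + 1) / p ≤ 2 := (div_le_iff₀ (by positivity)).mpr (by linarith)
    calc |(|t| ^ p - (absRpowChebyshev p N).eval t)|
        ≤ 2 * ((p + 1) / p * ((p + 1) / N) ^ p) :=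
          abs_rpow_sub_eval_absRpowChebyshev_le (by positivity) (by nlinarith) ht
      _ ≤ 2 * (2 * (2 * p / N) ^ p) := by gcongr; linarith
      _ ≤ 4 ^ p * (2 * p / N) ^ p := by
          rw [← mul_assoc]
          gcongr
          linarith
      _ = (8 * p / N) ^ p := by
          rw [← Real.mul_rpow (by norm_num) (by positivity)]
          ring_nf
      _ ≤ (1 / R) ^ p := by
          gcongr ?_ ^ p
          rw [div_le_div_iff₀ N_pos (by positivity)]
          linarith
      _ = δ := R_rpow

end PolynomialApproximation

section Equilateral

lemma abs_le_one_of_sum_abs_rpow_le_one {σ : Type*} [Fintype σ] {p : ℝ} (hp : 0 < p) {v : σ → ℝ}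
    (hv : ∑ k, |v k| ^ p ≤ 1) (k : σ) : |v k| ≤ 1 := by
  have rpow_le_one : |v k| ^ p ≤ 1 :=
    (Finset.single_le_sum (f := fun k ↦ |v k| ^ p)
      (fun _ _ ↦ Real.rpow_nonneg (abs_nonneg _) _) (Finset.mem_univ k)).trans hv
  by_contra! one_lt
  exact (Real.one_lt_rpow one_lt hp).not_ge rpow_le_one

lemma card_le_of_sum_abs_sub_rpow_eq_one {ι σ : Type*} [Fintype ι] [Fintype σ] [Nonempty σ]
    {p : ℝ} (hp : 1 ≤ p) {x : ι → σ → ℝ}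
    (hx : Pairwise fun i j ↦ ∑ k, |x i k - x j k| ^ p = 1) :
    (Fintype.card ι : ℝ) ≤
      380 * p * Fintype.card σ * (Fintype.card σ * √(Fintype.card ι)) ^ (1 / p) := by
  rcases isEmpty_or_nonempty ι with _ | _
  · simp only [Fintype.card_eq_zero, Nat.cast_zero]
    positivity
  set m : ℝ := (Fintype.card ι : ℝ) with hm
  set n : ℝ := (Fintype.card σ : ℝ) with hn
  have p_pos : 0 < p := by positivity
  have one_le_m : 1 ≤ m := Nat.one_le_cast.mpr Fintype.card_pos
  have one_le_n : 1 ≤ n := Nat.one_le_cast.mpr Fintype.card_pos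
  have one_le_mul : 1 ≤ n * √m :=
    one_le_mul_of_one_le_of_one_le one_le_n (Real.one_le_sqrt.mpr one_le_m)
  have abs_sub_le_one (i j : ι) (k : σ) : |x i k - x j k| ≤ 1 := by
    rcases eq_or_ne i j with rfl | hij
    · simp
    · exact abs_le_one_of_sum_abs_rpow_le_one p_pos (hx hij).le k
  obtain ⟨P, natDegree_P, hP⟩ := exists_polynomial_abs_abs_rpow_sub_eval_le hp
    (δ := 1 / (2 * (n * √m))) (by positivity)
    ((div_le_one (by positivity)).mpr (by linarith))
  have card_le : m ≤ 10 * (n * P.natDegree + 1) := by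
    have := card_le_of_abs_sub_eval_le (f := fun t ↦ |t| ^ p) (by simp [p_pos.ne']) hx
      (fun i j k ↦ hP _ (abs_sub_le_one i j k)) (le_of_eq (by rw [← hn, ← hm]; field_simp))
    rw [hm, hn]
    exact_mod_cast this
  rw [one_div_one_div] at natDegree_P
  set R : ℝ := (2 * (n * √m)) ^ (1 / p) with hR
  have one_le_R : 1 ≤ R := Real.one_le_rpow (by linarith) (by positivity)
  have R_le : R ≤ 2 * (n * √m) ^ (1 / p) := by
    rw [hR, Real.mul_rpow (by norm_num) (by positivity)]
    gcongr
    exact Real.rpow_le_self_of_one_le (by norm_num) ((div_le_one p_pos).mpr hp)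
  have one_le_prod : 1 ≤ n * (p * R) := one_le_mul_of_one_le_of_one_le one_le_n
    (one_le_mul_of_one_le_of_one_le hp one_le_R)
  calc m ≤ 10 * (n * P.natDegree + 1) := card_le
    _ ≤ 10 * (n * (18 * p * R) + n * (p * R)) := by gcongr
    _ = 190 * p * n * R := by ring
    _ ≤ 190 * p * n * (2 * (n * √m) ^ (1 / p)) := by gcongr
    _ = 380 * p * n * (n * √m) ^ (1 / p) := by ring

lemma rpow_inv_two_mul_sub_one_le_two {p : ℝ} (hp : 1 ≤ p) : p ^ (2 * p - 1)⁻¹ ≤ 2 := by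
  rw [Real.rpow_inv_le_iff_of_pos (by positivity) zero_le_two (by linarith)]
  have bernoulli := one_add_mul_self_le_rpow_one_add (s := 1) (p := 2 * p - 1) (by norm_num)
    (by linarith)
  norm_num at bernoulli
  linarith

lemma mul_rpow_two_mul_div_le {p K : ℝ} (hp : 1 ≤ p) (hK : 1 ≤ K) :
    (K * p) ^ (2 * p / (2 * p - 1)) ≤ 2 * K ^ 2 * p := by
  have exponent_pos : 0 < 2 * p - 1 := by linarith
  calc (K * p) ^ (2 * p / (2 * p - 1)) = (K * p) ^ (1 + (2 * p - 1)⁻¹) := by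
        congr 1
        field_simp
        ring
    _ = K * p * (K ^ (2 * p - 1)⁻¹ * p ^ (2 * p - 1)⁻¹) := by
        rw [Real.rpow_add (by positivity), Real.rpow_one,
          Real.mul_rpow (by positivity) (by positivity)]
    _ ≤ K * p * (K * 2) := by
        gcongr
        · exact Real.rpow_le_self_of_one_le hK (inv_le_one_of_one_le₀ (by linarith))
        · exact rpow_inv_two_mul_sub_one_le_two hp
    _ = 2 * K ^ 2 * p := by ring

lemma le_mul_rpow_of_le_mul_rpow_sqrt {p m n K : ℝ} (hp : 1 ≤ p) (hm : 0 ≤ m) (hn : 0 < n)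
    (hK : 1 ≤ K) (h : m ≤ K * p * n * (n * √m) ^ (1 / p)) :
    m ≤ 2 * K ^ 2 * p * n ^ ((2 * p + 2) / (2 * p - 1)) := by
  rcases hm.eq_or_lt with rfl | m_pos
  · positivity
  have exponent_pos : 0 < 2 * p - 1 := by linarith
  have isolated : m ^ ((2 * p - 1) / (2 * p)) ≤ K * p * n ^ ((p + 1) / p) := by
    rw [show (2 * p - 1) / (2 * p) = 1 - 1 / (2 * p) by field_simp, Real.rpow_sub m_pos,
      Real.rpow_one, div_le_iff₀ (by positivity)]
    calc m ≤ K * p * n * (n * √m) ^ (1 / p) := h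
      _ = K * p * (n * n ^ (1 / p)) * m ^ (1 / 2 * (1 / p)) := by
          rw [Real.mul_rpow hn.le (by positivity), Real.sqrt_eq_rpow, ← Real.rpow_mul hm]
          ring
      _ = K * p * n ^ ((p + 1) / p) * m ^ (1 / (2 * p)) := by
          rw [show (p + 1) / p = 1 + 1 / p by field_simp, Real.rpow_add hn, Real.rpow_one,
            one_div_mul_one_div]
  calc m = (m ^ ((2 * p - 1) / (2 * p))) ^ (2 * p / (2 * p - 1)) := by
        rw [← Real.rpow_mul hm, div_mul_div_cancel₀ (by positivity), div_self exponent_pos.ne',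
          Real.rpow_one]
    _ ≤ (K * p * n ^ ((p + 1) / p)) ^ (2 * p / (2 * p - 1)) := by gcongr
    _ = (K * p) ^ (2 * p / (2 * p - 1)) * n ^ ((2 * p + 2) / (2 * p - 1)) := by
        rw [Real.mul_rpow (by positivity) (by positivity), ← Real.rpow_mul hn.le]
        congr 2
        field_simp
    _ ≤ 2 * K ^ 2 * p * n ^ ((2 * p + 2) / (2 * p - 1)) := by
        gcongr
        exact mul_rpow_two_mul_div_le hp hK

lemma sum_abs_div_sub_div_rpow_eq_one {σ : Type*} [Fintype σ] {p r : ℝ} (hp : 0 < p) (hr : 0 < r)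
    {x y : PiLp (ENNReal.ofReal p) fun _ : σ ↦ ℝ} (h : ‖x - y‖ = r) :
    ∑ k, |x k / r - y k / r| ^ p = 1 := by
  have toReal_ofReal : (ENNReal.ofReal p).toReal = p := ENNReal.toReal_ofReal hp.le
  rw [PiLp.norm_eq_sum (by rwa [toReal_ofReal]), toReal_ofReal] at h
  have sum_eq : ∑ k, |x k - y k| ^ p = r ^ p := by
    rw [← h, ← Real.rpow_mul (by positivity), one_div_mul_cancel hp.ne', Real.rpow_one]
    rfl
  simp_rw [← sub_div, abs_div, abs_of_pos hr, Real.div_rpow (abs_nonneg _) hr.le]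
  rw [← Finset.sum_div, sum_eq, div_self (by positivity)]

end Equilateral

theorem alon_pudlak_lp_bound :
    ∃ c : ℝ, 0 < c ∧ ∀ (p : ℝ), 1 ≤ p → ∀ (n : ℕ), 1 ≤ n →
      ∀ S : Finset (PiLp (ENNReal.ofReal p) (fun _ : Fin n => ℝ)),
        (∃ lam : ℝ, 0 < lam ∧ ∀ x ∈ S, ∀ y ∈ S, x ≠ y → ‖x - y‖ = lam) →
        (S.card : ℝ) ≤ c * p * (n : ℝ) ^ ((2 * p + 2) / (2 * p - 1)) := by
  refine ⟨2 * 380 ^ 2, by norm_num, fun p hp n hn S ⟨lam, hlam, hS⟩ ↦ ?_⟩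
  have : NeZero n := ⟨by lia⟩
  have normalized : Pairwise fun x y : S ↦ ∑ k, |x.1 k / lam - y.1 k / lam| ^ p = 1 :=
    fun x y hxy ↦ sum_abs_div_sub_div_rpow_eq_one (by positivity) hlam
      (hS x x.2 y y.2 (Subtype.coe_ne_coe.mpr hxy))
  have card_le := card_le_of_sum_abs_sub_rpow_eq_one hp normalized
  rw [Fintype.card_coe, Fintype.card_fin] at card_le
  exact le_mul_rpow_of_le_mul_rpow_sqrt hp (by positivity) (by positivity) (by norm_num) card_le
end

section
/- There exists a constant c > 0 such that for every n ≥ 2, every equilateral subset of ℓ_1^n has cardinality at most c · n · log n. -/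
/-!
Scale and translate an equilateral set so that its points lie in the unit ball and have pairwise
distance `1`. Round every coordinate down to a grid. If `ρ` denotes the rounding, then
`|x - y| + 2 * vol ([ρ x, x) ∩ [ρ y, y)) = |x - ρ y| + |y - ρ x| - |ρ x - ρ y|`,
and every term on the right depends on `x` or on `y` only through its rounding. Hence, for a vector
`c` indexed by the points whose sum over each rounding class vanishes in every coordinate, the
quadratic form of the distance matrix `J - 1` equals minus that of a matrix `K` built from the
volumes on the left, so `⟪c, K c⟫ = ‖c‖²`. The matrix `K` is positive semidefinite, being a sum of
Gram matrices of indicator functions, so the dimension of the space of such `c` is at most `tr K`,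
which is twice the total rounding error. That space has codimension at most `n` times the number
of grid points. The grid `sinh (v δ) / n` is evenly spaced near `0` and geometric away from it: its
error is proportional to `|x| + 1 / n`, which sums to at most `2` over the coordinates, and it
has only `O(log n)` points in `[-1, 1]`.
-/

open Finset MeasureTheory Matrix

section LinearAlgebra

variable {𝕜 : Type*} [RCLike 𝕜]

lemma finrank_le_re_trace_of_norm_sq_le_re_inner {E : Type*} [NormedAddCommGroup E]
    [InnerProductSpace 𝕜 E] [FiniteDimensional 𝕜 E] {T : E →ₗ[𝕜] E} (hT : T.IsPositive)
    (W : Submodule 𝕜 E) (hW : ∀ x ∈ W, ‖x‖ ^ 2 ≤ RCLike.re (inner 𝕜 x (T x))) :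
    (Module.finrank 𝕜 W : ℝ) ≤ RCLike.re (T.trace 𝕜 E) := by
  classical
  let w := stdOrthonormalBasis 𝕜 W
  have hw : Orthonormal 𝕜 fun a => (w a : E) := w.orthonormal.comp_linearIsometry W.subtypeₗᵢ
  obtain ⟨B, b, hwB, hb⟩ := hw.toSubtypeRange.exists_orthonormalBasis_extension
  let q : E → ℝ := fun x => RCLike.re (inner 𝕜 x (T x))
  calc (Module.finrank 𝕜 W : ℝ)
      = ∑ a, ‖(w a : E)‖ ^ 2 := by simp [hw.norm_eq_one]
    _ ≤ ∑ a, q (w a) := sum_le_sum fun a _ => hW _ (w a).2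
    _ = ∑ x ∈ univ.image fun a => (w a : E), q x :=
        (sum_image hw.linearIndependent.injective.injOn).symm
    _ ≤ ∑ x ∈ B, q x :=
        sum_le_sum_of_subset_of_nonneg (image_subset_iff.2 fun a _ => hwB ⟨a, rfl⟩)
          fun x _ _ => hT.re_inner_nonneg_right x
    _ = RCLike.re (T.trace 𝕜 E) := by
        rw [T.trace_eq_sum_inner b, map_sum, hb, ← sum_coe_sort]

lemma finrank_le_trace_of_norm_sq_le_dotProduct_mulVec {ι : Type*} [Fintype ι]
    {K : Matrix ι ι ℝ} (hK : K.PosSemidef) (W : Submodule ℝ (EuclideanSpace ℝ ι))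
    (hW : ∀ c ∈ W, ‖c‖ ^ 2 ≤ c.ofLp ⬝ᵥ K *ᵥ c.ofLp) :
    (Module.finrank ℝ W : ℝ) ≤ K.trace := by
  classical
  refine (finrank_le_re_trace_of_norm_sq_le_re_inner (isPositive_toEuclideanLin_iff.2 hK) W
    fun c hc => (hW c hc).trans_eq ?_).trans_eq ?_
  · simp [EuclideanSpace.inner_eq_star_dotProduct, dotProduct_comm]
  · simp [toLpLin_eq_toLin]

lemma exists_submodule_sum_fiber_eq_zero {ι κ α : Type*} [Fintype ι] [Fintype κ] [DecidableEq α]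
    (l : κ → ι → α) (R : Finset α) (hl : ∀ i j, l i j ∈ R) :
    ∃ W : Submodule 𝕜 (EuclideanSpace 𝕜 ι),
      Fintype.card ι ≤ Module.finrank 𝕜 W + Fintype.card κ * #R ∧
      ∀ c ∈ W, ∀ i v, ∑ j with l i j = v, c j = 0 := by
  let fiberSums : EuclideanSpace 𝕜 ι →ₗ[𝕜] (κ × R → 𝕜) :=
    LinearMap.pi fun p => ∑ j with l p.1 j = p.2, (EuclideanSpace.proj j).toLinearMap
  refine ⟨LinearMap.ker fiberSums, ?_, fun c hc i v => ?_⟩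
  · have h_rank := fiberSums.finrank_range_add_finrank_ker
    have h_range := Submodule.finrank_le (LinearMap.range fiberSums)
    simp only [finrank_euclideanSpace, Module.finrank_fintype_fun_eq_card, Fintype.card_prod,
      Fintype.card_coe] at h_rank h_range
    rw [← h_rank, add_comm]
    gcongr
  · by_cases hv : v ∈ R
    · simpa [fiberSums] using congrFun (LinearMap.mem_ker.1 hc) (i, ⟨v, hv⟩)
    · refine sum_eq_zero fun j hj => (hv ?_).elim
      exact (mem_filter.1 hj).2 ▸ hl i j

lemma mulVec_comp_eq_zero_of_sum_fiber_eq_zero {ι m α A : Type*} [Fintype ι] [DecidableEq α]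
    [NonUnitalNonAssocSemiring A] {c : ι → A} {l : ι → α}
    (hc : ∀ v, ∑ j with l j = v, c j = 0) (f : m → α → A) :
    (of fun j k => f j (l k)) *ᵥ c = 0 := by
  ext j
  calc ∑ k, f j (l k) * c k
      = ∑ v ∈ univ.image l, ∑ k with l k = v, f j (l k) * c k :=
        (sum_fiberwise_of_maps_to (fun k _ => mem_image_of_mem l (mem_univ k)) _).symm
    _ = ∑ v ∈ univ.image l, f j v * ∑ k with l k = v, c k := by
        refine sum_congr rfl fun v _ => ?_
        rw [mul_sum]
        exact sum_congr rfl fun k hk => by rw [(mem_filter.1 hk).2]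
    _ = 0 := by simp [hc]

end LinearAlgebra

section Rounding

variable {α ι κ : Type*}

/-- The interval between `x` and its rounding `l (u x)`, where `u` sends a real number to the label
of the largest grid point below it and `l` sends a label to its grid point. Its length is the
rounding error. -/
def roundingGap (l : α → ℝ) (u : ℝ → α) (x : ℝ) : Set ℝ :=
  Set.Ico (l (u x)) x

/-- The Gram matrix of the indicator functions of the rounding gaps of the numbers `x j`; summed
over the coordinates and doubled, it is the matrix `K` of the proof idea above. -/
noncomputable def gapMatrix (l : α → ℝ) (u : ℝ → α) (x : ι → ℝ) : Matrix ι ι ℝ :=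
  of fun j k => volume.real (roundingGap l u (x j) ∩ roundingGap l u (x k))

lemma posSemidef_gapMatrix [Finite ι] (l : α → ℝ) (u : ℝ → α) (x : ι → ℝ) :
    (gapMatrix l u x).PosSemidef :=
  posSemidef_matrix_measure_inter (fun _ => measurableSet_Ico) fun _ => measure_Ico_lt_top.ne

variable [LinearOrder α] {l : α → ℝ} {u : ℝ → α}

lemma gapMatrix_apply_self (gc : GaloisConnection l u) (x : ι → ℝ) (j : ι) :
    gapMatrix l u x j j = x j - l (u (x j)) := by
  simp [gapMatrix, roundingGap, gc.l_u_le]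

lemma abs_sub_add_two_mul_volume_roundingGap_inter (gc : GaloisConnection l u) (x y : ℝ) :
    |x - y| + 2 * volume.real (roundingGap l u x ∩ roundingGap l u y) =
      |x - l (u y)| + |y - l (u x)| - |l (u x) - l (u y)| := by
  wlog h : u x ≤ u y generalizing x y
  · have := this y x (le_of_not_ge h)
    rw [abs_sub_comm x y, Set.inter_comm, abs_sub_comm (l (u x)), this]
    ring
  have hx : l (u x) ≤ x := gc.l_u_le x
  have hy : l (u y) ≤ y := gc.l_u_le y
  rw [roundingGap, roundingGap, Set.Ico_inter_Ico, Real.volume_real_Ico]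
  rcases h.eq_or_lt with h_eq | h_lt
  · rw [← h_eq] at hy ⊢
    rw [max_self, max_eq_left (sub_nonneg.2 (le_min hx hy)), sub_self, abs_zero,
      abs_of_nonneg (sub_nonneg.2 hx), abs_of_nonneg (sub_nonneg.2 hy)]
    linarith [min_add_max x y, max_sub_min_eq_abs' x y]
  · have hxy : x < l (u y) := gc.lt_iff_lt.2 h_lt
    have h_disjoint : min x y - max (l (u x)) (l (u y)) ≤ 0 := by
      linarith [min_le_left x y, le_max_right (l (u x)) (l (u y))]
    rw [max_eq_right h_disjoint, abs_of_nonpos (by linarith : x - y ≤ 0),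
      abs_of_nonpos (by linarith : x - l (u y) ≤ 0), abs_of_nonneg (by linarith : 0 ≤ y - l (u x)),
      abs_of_nonpos (by linarith : l (u x) - l (u y) ≤ 0)]
    ring

lemma dotProduct_abs_sub_mulVec_eq_neg_gapMatrix [Fintype ι] (gc : GaloisConnection l u)
    (x c : ι → ℝ) (hc : ∀ v, ∑ j with u (x j) = v, c j = 0) :
    c ⬝ᵥ (of fun j k => |x j - x k|) *ᵥ c = -(2 * (c ⬝ᵥ gapMatrix l u x *ᵥ c)) := by
  let A : Matrix ι ι ℝ := of fun j k => |x j - l (u (x k))|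
  let B : Matrix ι ι ℝ := of fun j k => |l (u (x j)) - l (u (x k))|
  have hA : A *ᵥ c = 0 := mulVec_comp_eq_zero_of_sum_fiber_eq_zero hc fun j v => |x j - l v|
  have hB : B *ᵥ c = 0 :=
    mulVec_comp_eq_zero_of_sum_fiber_eq_zero hc fun j v => |l (u (x j)) - l v|
  have hAt : c ⬝ᵥ Aᵀ *ᵥ c = 0 := by rw [dotProduct_mulVec, vecMul_transpose, hA, zero_dotProduct]
  have h_decomp : (of fun j k => |x j - x k|) = A + Aᵀ - B - (2 : ℝ) • gapMatrix l u x := by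
    ext j k
    have := abs_sub_add_two_mul_volume_roundingGap_inter gc (x j) (x k)
    simp only [A, B, gapMatrix, of_apply, Matrix.add_apply, Matrix.sub_apply, Matrix.smul_apply,
      transpose_apply, smul_eq_mul]
    linarith
  rw [h_decomp]
  simp [add_mulVec, sub_mulVec, smul_mulVec, hA, hB, hAt]

lemma two_mul_dotProduct_sum_gapMatrix_mulVec [Fintype ι] [Fintype κ] [Nonempty κ]
    (gc : GaloisConnection l u) (y : ι → κ → ℝ)
    (hy : Pairwise fun j k => ∑ i, |y j i - y k i| = 1) (c : ι → ℝ)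
    (hc : ∀ i v, ∑ j with u (y j i) = v, c j = 0) :
    2 * (c ⬝ᵥ (∑ i, gapMatrix l u fun j => y j i) *ᵥ c) = c ⬝ᵥ c := by
  classical
  have h_dist : ∑ i, (of fun j k => |y j i - y k i|) = (of fun _ _ => 1) - (1 : Matrix ι ι ℝ) := by
    ext j k
    rw [Matrix.sum_apply]
    rcases eq_or_ne j k with rfl | hjk
    · simp
    · simp [hy hjk, hjk]
  have h_ones : (of fun _ _ => 1 : Matrix ι ι ℝ) *ᵥ c = 0 :=
    mulVec_comp_eq_zero_of_sum_fiber_eq_zero (hc (Classical.arbitrary κ)) fun _ _ => 1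
  have h_neg := calc
    -(2 * (c ⬝ᵥ (∑ i, gapMatrix l u fun j => y j i) *ᵥ c))
      = ∑ i, -(2 * (c ⬝ᵥ (gapMatrix l u fun j => y j i) *ᵥ c)) := by
        rw [sum_mulVec, dotProduct_sum, mul_sum, sum_neg_distrib]
    _ = ∑ i, c ⬝ᵥ (of fun j k => |y j i - y k i|) *ᵥ c :=
        sum_congr rfl fun i _ => (dotProduct_abs_sub_mulVec_eq_neg_gapMatrix gc _ c (hc i)).symm
    _ = c ⬝ᵥ ((of fun _ _ => 1) - (1 : Matrix ι ι ℝ)) *ᵥ c := by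
        rw [← h_dist, sum_mulVec, dotProduct_sum]
    _ = -(c ⬝ᵥ c) := by rw [sub_mulVec, h_ones, one_mulVec, zero_sub, dotProduct_neg]
  exact neg_injective h_neg

lemma card_le_of_pairwise_sum_abs_sub_eq_one [Fintype ι] [Fintype κ] [Nonempty κ]
    (gc : GaloisConnection l u) (R : Finset α) (y : ι → κ → ℝ) (hR : ∀ j i, u (y j i) ∈ R)
    (hy : Pairwise fun j k => ∑ i, |y j i - y k i| = 1) :
    (Fintype.card ι : ℝ) ≤
      2 * ∑ j, ∑ i, (y j i - l (u (y j i))) + Fintype.card κ * #R := by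
  obtain ⟨W, hW_card, hW⟩ := exists_submodule_sum_fiber_eq_zero (𝕜 := ℝ)
    (fun i j => u (y j i)) R fun i j => hR j i
  let K : Matrix ι ι ℝ := (2 : ℝ) • ∑ i, gapMatrix l u fun j => y j i
  have hK : K.PosSemidef :=
    (posSemidef_sum univ fun i _ => posSemidef_gapMatrix l u fun j => y j i).smul zero_le_two
  have h_form (c) (hc : c ∈ W) : ‖c‖ ^ 2 = c.ofLp ⬝ᵥ K *ᵥ c.ofLp := by
    rw [smul_mulVec, dotProduct_smul, smul_eq_mul,
      two_mul_dotProduct_sum_gapMatrix_mulVec gc y hy _ (hW c hc), EuclideanSpace.real_norm_sq_eq]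
    simp [dotProduct, sq]
  calc (Fintype.card ι : ℝ)
      ≤ Module.finrank ℝ W + Fintype.card κ * #R := mod_cast hW_card
    _ ≤ K.trace + Fintype.card κ * #R := by
        gcongr
        exact finrank_le_trace_of_norm_sq_le_dotProduct_mulVec hK W fun c hc => (h_form c hc).le
    _ = 2 * ∑ j, ∑ i, (y j i - l (u (y j i))) + Fintype.card κ * #R := by
        rw [Matrix.trace_smul, smul_eq_mul]
        simp only [Matrix.trace, diag_apply, Matrix.sum_apply, gapMatrix_apply_self gc]

end Rounding

section SinhGrid

open Real

/-- The grid point `sinh (v δ) / t` with label `v`. The grid is roughly evenly spaced on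
`[-1 / t, 1 / t]` and roughly geometric with ratio `exp δ` outside. -/
noncomputable def sinhGrid (δ t : ℝ) (v : ℤ) : ℝ :=
  sinh (v * δ) / t

/-- The label of the largest point of `sinhGrid δ t` that is at most `x`. -/
noncomputable def sinhLevel (δ t x : ℝ) : ℤ :=
  ⌊arsinh (t * x) / δ⌋

variable {δ t : ℝ}

lemma galoisConnection_sinhGrid_sinhLevel (hδ : 0 < δ) (ht : 0 < t) :
    GaloisConnection (sinhGrid δ t) (sinhLevel δ t) := fun v x => by
  rw [sinhGrid, sinhLevel, div_le_iff₀' ht, Int.le_floor, le_div_iff₀ hδ,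
    ← sinh_le_sinh (y := arsinh _), sinh_arsinh]

lemma sinh_sub_sinh_sub_le (hδ : 0 ≤ δ) (s : ℝ) :
    sinh s - sinh (s - δ) ≤ (exp δ - 1) * (|sinh s| + 1) := by
  have h_cosh : cosh s ≤ |sinh s| + 1 := by
    have h_exp : exp (-|s|) ≤ 1 := exp_le_one_iff.2 (neg_nonpos.2 (abs_nonneg s))
    rw [← cosh_sub_sinh, cosh_abs, ← abs_sinh] at h_exp
    linarith
  have h_cosh_sub_one : 0 ≤ cosh δ - 1 := sub_nonneg.2 (one_le_cosh δ)
  have h_sinh : 0 ≤ sinh δ := sinh_nonneg_iff.2 hδ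
  calc sinh s - sinh (s - δ)
      = -sinh s * (cosh δ - 1) + cosh s * sinh δ := by rw [sinh_sub]; ring
    _ ≤ (|sinh s| + 1) * (cosh δ - 1) + (|sinh s| + 1) * sinh δ :=
        add_le_add
          (mul_le_mul_of_nonneg_right ((neg_le_abs _).trans (le_add_of_nonneg_right zero_le_one))
            h_cosh_sub_one)
          (mul_le_mul_of_nonneg_right h_cosh h_sinh)
    _ = (exp δ - 1) * (|sinh s| + 1) := by rw [← cosh_add_sinh]; ring

lemma sub_sinhGrid_sinhLevel_le (hδ : 0 < δ) (ht : 0 < t) (x : ℝ) :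
    x - sinhGrid δ t (sinhLevel δ t x) ≤ (exp δ - 1) * (|x| + 1 / t) := by
  set s := arsinh (t * x) with hs
  have hx : sinh s = t * x := sinh_arsinh _
  have h_level : s - δ ≤ sinhLevel δ t x * δ := by
    have := (Int.lt_floor_add_one (s / δ)).le
    rw [div_le_iff₀ hδ] at this
    rw [sinhLevel, ← hs]
    linarith
  calc x - sinhGrid δ t (sinhLevel δ t x)
      = (sinh s - sinh (sinhLevel δ t x * δ)) / t := by rw [hx, sinhGrid]; field_simp
    _ ≤ (sinh s - sinh (s - δ)) / t := by gcongr; exact sinh_le_sinh.2 h_level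
    _ ≤ (exp δ - 1) * (|sinh s| + 1) / t := by gcongr; exact sinh_sub_sinh_sub_le hδ.le s
    _ = (exp δ - 1) * (|x| + 1 / t) := by rw [hx, abs_mul, abs_of_pos ht]; field_simp

lemma card_Icc_sinhLevel_le (hδ : 0 < δ) (ht : 0 < t) :
    (#(Icc (sinhLevel δ t (-1)) (sinhLevel δ t 1)) : ℝ) ≤ 2 * (arsinh t / δ) + 2 := by
  have h_mono : sinhLevel δ t (-1) ≤ sinhLevel δ t 1 :=
    (galoisConnection_sinhGrid_sinhLevel hδ ht).monotone_u (by norm_num)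
  have h_upper : (sinhLevel δ t 1 : ℝ) ≤ arsinh t / δ := by
    rw [sinhLevel, mul_one]
    exact Int.floor_le _
  have h_lower : -(arsinh t / δ) < sinhLevel δ t (-1) + 1 := by
    rw [sinhLevel, mul_neg_one, arsinh_neg, neg_div]
    exact Int.lt_floor_add_one _
  have h_card := Int.card_Icc_of_le _ _ (h_mono.trans (Int.le_add_one le_rfl))
  rw [← Int.cast_natCast, h_card]
  push_cast
  linarith

lemma arsinh_le_three_mul_log {x : ℝ} (hx : 2 ≤ x) : arsinh x ≤ 3 * log x := by
  have h_sqrt : √(1 + x ^ 2) ≤ x + 1 := sqrt_le_iff.2 ⟨by linarith, by nlinarith⟩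
  calc arsinh x = log (x + √(1 + x ^ 2)) := rfl
    _ ≤ log (x ^ 3) := log_le_log (by positivity) (by nlinarith [pow_le_pow_left₀ zero_le_two hx 2])
    _ = 3 * log x := by rw [log_pow]; norm_num

end SinhGrid

section Equilateral

open Real

variable {ι κ : Type*} [Fintype κ] [Nonempty κ]

lemma mul_card_le_of_pairwise_sum_abs_sub_eq_one [Fintype ι] {δ : ℝ} (hδ : 0 < δ)
    (y : ι → κ → ℝ) (hy_le : ∀ j, ∑ i, |y j i| ≤ 1)
    (hy : Pairwise fun j k => ∑ i, |y j i - y k i| = 1) :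
    (1 - 4 * (exp δ - 1)) * Fintype.card ι ≤
      Fintype.card κ * (2 * (arsinh (Fintype.card κ : ℝ) / δ) + 2) := by
  set n := (Fintype.card κ : ℝ) with hn_def
  have hn : 0 < n := Nat.cast_pos.2 Fintype.card_pos
  have gc := galoisConnection_sinhGrid_sinhLevel hδ hn
  have h_level (j i) :
      sinhLevel δ n (y j i) ∈ Icc (sinhLevel δ n (-1)) (sinhLevel δ n 1) := by
    have h_abs : |y j i| ≤ 1 :=
      (single_le_sum (fun i _ => abs_nonneg (y j i)) (mem_univ i)).trans (hy_le j)
    exact mem_Icc.2 ⟨gc.monotone_u (abs_le.1 h_abs).1, gc.monotone_u (abs_le.1 h_abs).2⟩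
  have h_error (j) : ∑ i, (y j i - sinhGrid δ n (sinhLevel δ n (y j i))) ≤ (exp δ - 1) * 2 := calc
    _ ≤ ∑ i, (exp δ - 1) * (|y j i| + 1 / n) :=
        sum_le_sum fun i _ => sub_sinhGrid_sinhLevel_le hδ hn (y j i)
    _ = (exp δ - 1) * (∑ i, |y j i| + 1) := by
        rw [← mul_sum, sum_add_distrib]
        simp [← hn_def, hn.ne']
    _ ≤ (exp δ - 1) * 2 := by
        have : 0 ≤ exp δ - 1 := sub_nonneg.2 (one_le_exp hδ.le)
        gcongr
        linarith [hy_le j]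
  have h_total : ∑ j, ∑ i, (y j i - sinhGrid δ n (sinhLevel δ n (y j i))) ≤
      Fintype.card ι * ((exp δ - 1) * 2) := by
    simpa using sum_le_sum fun j (_ : j ∈ univ) => h_error j
  have h_card := card_le_of_pairwise_sum_abs_sub_eq_one gc _ y h_level hy
  have h_grid := mul_le_mul_of_nonneg_left (card_Icc_sinhLevel_le hδ hn) hn.le
  linarith

lemma mul_card_le_of_equilateral {δ : ℝ} (hδ : 0 < δ) (S : Finset (PiLp 1 fun _ : κ => ℝ))
    {r : ℝ} (hr : 0 < r) (hS : ∀ x ∈ S, ∀ y ∈ S, x ≠ y → ‖x - y‖ = r) :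
    (1 - 4 * (exp δ - 1)) * #S ≤
      Fintype.card κ * (2 * (arsinh (Fintype.card κ : ℝ) / δ) + 2) := by
  rcases S.eq_empty_or_nonempty with rfl | ⟨x₀, hx₀⟩
  · have : 0 ≤ arsinh (Fintype.card κ : ℝ) := arsinh_nonneg_iff.2 (Nat.cast_nonneg _)
    rw [card_empty, Nat.cast_zero, mul_zero]
    positivity
  let y : S → κ → ℝ := fun x i => (x.1 i - x₀ i) / r
  have h_norm (x z : PiLp 1 fun _ : κ => ℝ) : ∑ i, |(x i - z i) / r| = ‖x - z‖ / r := by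
    simp [PiLp.norm_eq_of_L1, abs_div, abs_of_pos hr, sum_div]
  have hy_le (x) : ∑ i, |y x i| ≤ 1 := by
    rw [h_norm, div_le_one hr]
    rcases eq_or_ne x.1 x₀ with h | h
    · simp [h, hr.le]
    · exact (hS _ x.2 _ hx₀ h).le
  have hy : Pairwise fun x z => ∑ i, |y x i - y z i| = 1 := fun x z hxz => by
    simp only [y, ← sub_div, sub_sub_sub_cancel_right]
    rw [h_norm, hS _ x.2 _ z.2 (Subtype.coe_ne_coe.2 hxz), div_self hr.ne']
  simpa using mul_card_le_of_pairwise_sum_abs_sub_eq_one hδ y hy_le hy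

end Equilateral

theorem alon_pudlak_l1_bound :
    ∃ c : ℝ, 0 < c ∧ ∀ (n : ℕ), 2 ≤ n →
      ∀ S : Finset (PiLp 1 (fun _ : Fin n => ℝ)),
        (∃ lam : ℝ, 0 < lam ∧ ∀ x ∈ S, ∀ y ∈ S, x ≠ y → ‖x - y‖ = lam) →
        (S.card : ℝ) ≤ c * n * Real.log n := by
  refine ⟨114, by norm_num, fun n hn S ⟨r, hr, hS⟩ => ?_⟩
  have : NeZero n := ⟨by lia⟩
  have hn' : (2 : ℝ) ≤ n := mod_cast hn
  set δ := Real.log (9 / 8)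
  have h_exp : Real.exp δ = 9 / 8 := Real.exp_log (by norm_num)
  have hδ : 1 / 9 ≤ δ := by
    linarith [Real.one_sub_inv_le_log_of_pos (by norm_num : (0 : ℝ) < 9 / 8)]
  have h_card := mul_card_le_of_equilateral (by linarith : 0 < δ) S hr hS
  rw [h_exp, Fintype.card_fin] at h_card
  have h_arsinh : Real.arsinh n / δ ≤ 27 * Real.log n := by
    have h_log : 0 ≤ Real.log n := Real.log_natCast_nonneg n
    rw [div_le_iff₀ (by linarith)]
    nlinarith [arsinh_le_three_mul_log hn', mul_le_mul_of_nonneg_right hδ h_log]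
  have h_log : 2 ≤ 3 * Real.log n := by
    linarith [Real.log_two_gt_d9, Real.log_le_log two_pos hn']
  have h_levels : 2 * (Real.arsinh n / δ) + 2 ≤ 57 * Real.log n := by linarith
  linarith [mul_le_mul_of_nonneg_left h_levels (Nat.cast_nonneg (α := ℝ) n)]
end
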